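/- arXiv:1312.1714 — 2 statements merged into one kernel-verified Lean document; each statement's English description precedes it below -/
import Mathlib

section
/- For every ε > 0 there exists a constant C > 0 such that the following holds for every integer q > 1: if x, y, z ∈ ℤ³ are linearly independent vectors with all coordinates in [0,q], and Λ ∈ M_{3,3}(ℤ) is the Gram matrix of (x,y,z), then the number of triples (x',y',z') ∈ (ℤ³)³ whose Gram matrix equals Λ is at most C · q^{ε} · gcd(Λ_{1,1}, Λ_{2,2}). -/
open Matrix

/-!
Identify `ℤ³` with the pure integral quaternions. Two pairs `(x, y)` and `(x', y')` with the same
nondegenerate Gram matrix are related by `q x = x' q` and `q y = y' q` for some primitive integral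
quaternion `q`, which determines `(x', y')`; the third vector is then determined up to a reflection.
So it suffices to count the possible `q`.

Let `N` be the odd part of the norm of `q`. Modulo `N`, right multiplication by `x` and by `y` acts
on `q` through scalars `l` and `m`, square roots of `-|x|²` and `-|y|²`. Since `q` kills the
commutator `x y - y x` modulo `N`, the norm of `q` divides a bounded multiple of the Gram minor, and
has few possible values. Compare with a fixed `q₀` of the same norm, with scalars `l₀` and `m₀`: if
`q` and `q'` also share the divisors `gcd(l + l₀, N)` and `gcd(m + m₀, N)`, then `q star(q')`
vanishes modulo `N / gcd(N, |x|², |y|²)`. The `q` in such a class lie in one left ideal, which is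
principal up to a factor `2`, and dividing by a generator leaves quaternions of norm at most
`16 gcd(|x|², |y|²)`.

The number of integral quaternions of norm `a` is `≪ a ^ (1 + ε)`: the same argument with
`x = y = i` bounds the representations of an integer as a sum of two squares, and two more
coordinates contribute a factor `≪ a`.
-/

open Quaternion

section DivisorBound

theorem succ_le_mul_rpow {ε : ℝ} (hε : 0 < ε) {p : ℕ} (hp : 2 ≤ p) (e : ℕ) :
    (e : ℝ) + 1 ≤ max 1 (1 / (ε * Real.log 2)) * ((p : ℝ) ^ e) ^ ε := by
  set B := max 1 (1 / (ε * Real.log 2))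
  have hlog : 0 < ε * Real.log 2 := mul_pos hε (Real.log_pos one_lt_two)
  have hB : 1 ≤ B * (ε * Real.log 2) := (div_le_iff₀ hlog).mp (le_max_right _ _)
  calc (e : ℝ) + 1 ≤ B * (e * (ε * Real.log 2) + 1) := by
        nlinarith [le_max_left 1 (1 / (ε * Real.log 2)), e.cast_nonneg (α := ℝ)]
    _ ≤ B * Real.exp (e * (ε * Real.log 2)) := by gcongr; exact Real.add_one_le_exp _
    _ = B * ((2 : ℝ) ^ e) ^ ε := by
        rw [Real.rpow_def_of_pos (by positivity), Real.log_pow]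
        ring_nf
    _ ≤ B * ((p : ℝ) ^ e) ^ ε := by
        have : (2 : ℝ) ≤ p := by exact_mod_cast hp
        gcongr

theorem succ_le_rpow_of_two_le_rpow {ε : ℝ} {p : ℕ} (hp : 2 ≤ (p : ℝ) ^ ε) (e : ℕ) :
    (e : ℝ) + 1 ≤ ((p : ℝ) ^ e) ^ ε :=
  calc (e : ℝ) + 1 ≤ 2 ^ e := by exact_mod_cast Nat.lt_two_pow_self
    _ ≤ ((p : ℝ) ^ ε) ^ e := by gcongr
    _ = ((p : ℝ) ^ e) ^ ε := Real.rpow_pow_comm p.cast_nonneg ε e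

/-- Only the primes `p` with `p ^ ε < 2` contribute to the constant. -/
theorem exists_card_divisors_le_rpow {ε : ℝ} (hε : 0 < ε) :
    ∃ C : ℝ, 1 ≤ C ∧ ∀ n : ℕ, n ≠ 0 → (n.divisors.card : ℝ) ≤ C * (n : ℝ) ^ ε := by
  set B := max 1 (1 / (ε * Real.log 2))
  have hB : 1 ≤ B := le_max_left _ _
  obtain ⟨K, hK⟩ := exists_nat_ge ((2 : ℝ) ^ (1 / ε))
  have large (p : ℕ) (hp : K ≤ p) : 2 ≤ (p : ℝ) ^ ε := by
    calc (2 : ℝ) = ((2 : ℝ) ^ (1 / ε)) ^ ε := by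
          rw [← Real.rpow_mul zero_le_two, one_div_mul_cancel hε.ne', Real.rpow_one]
      _ ≤ (p : ℝ) ^ ε := by
          have : (2 : ℝ) ^ (1 / ε) ≤ p := hK.trans (by exact_mod_cast hp)
          gcongr
  refine ⟨B ^ K, one_le_pow₀ hB, fun n hn => ?_⟩
  have local_bound : ∀ p ∈ n.primeFactors, ((n.factorization p : ℝ) + 1) ≤
      (if p < K then B else 1) * ((p : ℝ) ^ n.factorization p) ^ ε := by
    intro p hp
    split_ifs with h
    · exact succ_le_mul_rpow hε (Nat.prime_of_mem_primeFactors hp).two_le _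
    · rw [one_mul]
      exact succ_le_rpow_of_two_le_rpow (large p (not_lt.mp h)) _
  have constant_le : ∏ p ∈ n.primeFactors, (if p < K then B else 1) ≤ B ^ K := by
    rw [← Finset.prod_filter, Finset.prod_const]
    refine pow_le_pow_right₀ hB ?_
    simpa using Finset.card_le_card (t := Finset.range K)
      fun p hp => Finset.mem_range.mpr (Finset.mem_filter.mp hp).2
  have prod_eq : ∏ p ∈ n.primeFactors, (p : ℝ) ^ n.factorization p = n := by
    exact_mod_cast Nat.prod_factorization_pow_eq_self hn
  calc (n.divisors.card : ℝ) = ∏ p ∈ n.primeFactors, ((n.factorization p : ℝ) + 1) := by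
        rw [Nat.card_divisors hn]; push_cast; rfl
    _ ≤ ∏ p ∈ n.primeFactors, (if p < K then B else 1) * ((p : ℝ) ^ n.factorization p) ^ ε :=
        Finset.prod_le_prod (fun _ _ => by positivity) local_bound
    _ = (∏ p ∈ n.primeFactors, if p < K then B else 1) * (n : ℝ) ^ ε := by
        rw [Finset.prod_mul_distrib, Real.finsetProd_rpow _ _ fun _ _ => by positivity, prod_eq]
    _ ≤ B ^ K * (n : ℝ) ^ ε := by gcongr

end DivisorBound

section SquareRoots

theorem two_mul_mul_sub_eq_zero_of_associated {R : Type*} [CommRing R] {l l' l₀ : R}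
    (hl : l ^ 2 = l₀ ^ 2) (hl' : l' ^ 2 = l₀ ^ 2) (h : Associated (l + l₀) (l' + l₀)) :
    2 * l * (l - l') = 0 := by
  obtain ⟨r, hr⟩ := h.dvd
  obtain ⟨s, hs⟩ := h.dvd'
  have root : (l + l₀) * (l - l') = 0 := by
    linear_combination hl - s * hl' - (l' - l₀) * hs
  have sq_zero : (l - l') ^ 2 = 0 := by
    linear_combination (1 - r) * root - (l - l') * hr
  linear_combination sq_zero + hl - hl'

/-- The function `δ` is `a ↦ gcd (a, N)`. -/
theorem exists_divisors_valued_associated_of_eq {N : ℕ} (hN : N ≠ 0) :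
    ∃ δ : ZMod N → ℕ, (∀ a, δ a ∈ N.divisors) ∧ ∀ a b, δ a = δ b → Associated a b := by
  choose δ hδ u hu hδu using fun a : ZMod N => ZMod.eq_unit_mul_divisor a
  refine ⟨δ, fun a => Nat.mem_divisors.mpr ⟨hδ a, hN⟩, fun a b hab => ?_⟩
  have assoc (a : ZMod N) : Associated a (δ a) := by
    conv_lhs => rw [hδu a]
    exact associated_unit_mul_left _ _ (hu a)
  exact (assoc a).trans (hab ▸ (assoc b).symm)

end SquareRoots

section Primitive

variable {R : Type*} [CommRing R]

/-- A quaternion is primitive if its coordinates generate the unit ideal. The coefficients of a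
relation expressing this are, up to sign, the coordinates of the quaternion `h`. -/
def IsPrimitiveQuaternion (q : ℍ[R]) : Prop :=
  ∃ h : ℍ[R], (h * q).re = 1

namespace IsPrimitiveQuaternion

variable {q q' q₀ u x y : ℍ[R]} {l l' l₀ m : R}

theorem ne_zero [Nontrivial R] (hq : IsPrimitiveQuaternion q) : q ≠ 0 := by
  rintro rfl
  obtain ⟨h, hh⟩ := hq
  simp at hh

theorem eq_zero_of_smul_eq_zero (hq : IsPrimitiveQuaternion q) {r : R} (hr : r • q = 0) :
    r = 0 := by
  obtain ⟨h, hh⟩ := hq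
  calc r = (h * (r • q)).re := by rw [mul_smul_comm, re_smul, hh, smul_eq_mul, mul_one]
    _ = 0 := by rw [hr, mul_zero, re_zero]

theorem exists_add_star_eq_two (hq : IsPrimitiveQuaternion q) :
    ∃ h : ℍ[R], h * q + star (h * q) = 2 := by
  obtain ⟨h, hh⟩ := hq
  exact ⟨h, by rw [self_add_star', hh, mul_one]; rfl⟩

theorem two_smul_mul_star_eq_zero (hq' : IsPrimitiveQuaternion q') (hq : q * star q' = 0)
    (hu : u * star q' = 0) : (2 : R) • (q * star u) = 0 := by
  obtain ⟨h, hh⟩ := hq'.exists_add_star_eq_two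
  have hu' : q' * star u = 0 := by simpa using congrArg star hu
  calc (2 : R) • (q * star u) = q * (h * q' + star (h * q')) * star u := by
        rw [hh, two_smul, mul_two, add_mul]
    _ = q * h * (q' * star u) + q * star q' * (star h * star u) := by
        rw [star_mul]; noncomm_ring
    _ = 0 := by rw [hq, hu', mul_zero, zero_mul, add_zero]

theorem exists_mul_eq_smul (hq : IsPrimitiveQuaternion q) (h2 : IsUnit (2 : R))
    (hN : q * star q = 0) (hx : q * x * star q = 0) : ∃ l : R, q * x = l • q := by
  obtain ⟨h, hh⟩ := hq.exists_add_star_eq_two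
  refine ⟨(x * h * q).re, h2.smul_left_cancel.mp ?_⟩
  calc (2 : R) • (q * x) = q * x * (h * q + star (h * q)) := by rw [hh, two_smul, mul_two]
    _ = q * (x * h * q + star (x * h * q)) - q * star q * star (x * h) +
          q * x * star q * star h := by
        rw [star_mul h, star_mul (x * h)]; noncomm_ring
    _ = (2 * (x * h * q).re) • q := by
        rw [hN, hx, self_add_star', mul_coe_eq_smul, zero_mul, zero_mul, sub_zero, add_zero]
    _ = (2 : R) • (x * h * q).re • q := mul_smul _ _ _

theorem normSq_commutator_eq_zero (hq : IsPrimitiveQuaternion q) (hx : q * x = l • q)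
    (hy : q * y = m • q) : normSq (x * y - y * x) = 0 := by
  have killed : q * (x * y - y * x) = 0 := by
    rw [mul_sub, ← mul_assoc, ← mul_assoc, hx, hy, smul_mul_assoc, smul_mul_assoc, hx, hy,
      smul_comm, sub_self]
  refine hq.eq_zero_of_smul_eq_zero ?_
  rw [← mul_coe_eq_smul, ← self_mul_star, ← mul_assoc, killed, zero_mul]

theorem sq_eq_neg_normSq (hq : IsPrimitiveQuaternion q) (hsx : star x = -x)
    (hx : q * x = l • q) : l ^ 2 = -normSq x := by
  refine eq_neg_of_add_eq_zero_left (hq.eq_zero_of_smul_eq_zero ?_)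
  calc (l ^ 2 + normSq x) • q = q * x * x + q * (x * star x) := by
        rw [hx, smul_mul_assoc, hx, smul_smul, self_mul_star, mul_coe_eq_smul, add_smul, sq]
    _ = 0 := by rw [hsx]; noncomm_ring

end IsPrimitiveQuaternion

theorem add_smul_mul_star_eq_zero {q q' x : ℍ[R]} {l l' : R} (hsx : star x = -x)
    (hx : q * x = l • q) (hx' : q' * x = l' • q') : (l + l') • (q * star q') = 0 := by
  have hstar : x * star q' = -(l' • star q') := by
    rw [← Quaternion.star_smul, ← hx', star_mul, hsx, neg_mul, neg_neg]
  calc (l + l') • (q * star q') = q * x * star q' + l' • (q * star q') := by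
        rw [add_smul, hx, smul_mul_assoc]
    _ = 0 := by rw [mul_assoc, hstar, mul_neg, mul_smul_comm, neg_add_cancel]

theorem normSq_smul_mul_star_eq_zero {q q' q₀ x : ℍ[R]} {l l' l₀ : R} (h2 : IsUnit (2 : R))
    (hsx : star x = -x) (hq : IsPrimitiveQuaternion q) (hq' : IsPrimitiveQuaternion q')
    (hq₀ : IsPrimitiveQuaternion q₀) (hx : q * x = l • q) (hx' : q' * x = l' • q')
    (hx₀ : q₀ * x = l₀ • q₀) (hl : Associated (l + l₀) (l' + l₀)) :
    normSq x • (q * star q') = 0 := by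
  have sq_l := hq.sq_eq_neg_normSq hsx hx
  have sq_l₀ := hq₀.sq_eq_neg_normSq hsx hx₀
  have root := two_mul_mul_sub_eq_zero_of_associated (sq_l.trans sq_l₀.symm)
    ((hq'.sq_eq_neg_normSq hsx hx').trans sq_l₀.symm) hl
  have eq_mul_add : 2 * 2 * normSq x = -(2 * l) * (l + l') := by
    linear_combination 4 * sq_l - root
  refine (h2.mul h2).smul_left_cancel.mp ?_
  rw [smul_smul, eq_mul_add, mul_smul, add_smul_mul_star_eq_zero hsx hx hx', smul_zero, smul_zero]

end Primitive

section Intertwiners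

variable {R : Type*} [CommRing R] {x y x' w w' k : ℍ[R]} {n : R}

theorem mul_self_eq_neg_normSq (hx : star x = -x) : x * x = -((normSq x : R) : ℍ[R]) := by
  rw [← self_mul_star, hx, mul_neg, neg_neg]

theorem star_commutator (hx : star x = -x) (hy : star y = -y) :
    star (x * y - y * x) = -(x * y - y * x) := by
  rw [star_sub, star_mul, star_mul, hx, hy]
  noncomm_ring

theorem mul_commutator (hx : star x = -x) (y : ℍ[R]) :
    x * (x * y - y * x) = -((x * y - y * x) * x) := by
  have sq_comm : x * x * y = y * (x * x) := by
    rw [mul_self_eq_neg_normSq hx, neg_mul, mul_neg, coe_mul_eq_smul, mul_coe_eq_smul]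
  calc x * (x * y - y * x) = x * x * y - x * y * x := by noncomm_ring
    _ = -((x * y - y * x) * x) := by rw [sq_comm]; noncomm_ring

theorem two_mul_mul_eq_commutator_add (hx : star x = -x) (hy : star y = -y) :
    2 * (x * y) = (x * y - y * x) + ((2 * (x * y).re : R) : ℍ[R]) := by
  rw [← self_add_star', star_mul, hx, hy]
  noncomm_ring

theorem normSq_commutator (hx : star x = -x) (hy : star y = -y) :
    normSq (x * y - y * x) = 4 * (normSq x * normSq y - (x * y).re ^ 2) := by
  have hyx : y * x = star (x * y) := by rw [star_mul, hx, hy, neg_mul_neg]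
  rw [hyx, ← map_mul]
  simp only [normSq_def', re_sub, imI_sub, imJ_sub, imK_sub, re_star, imI_star, imJ_star, imK_star]
  ring

/-- The map `h ↦ n h - x' h x`, the unnormalized averaging operator onto the quaternions that
intertwine `x` and `x'` when these have square `-n`. -/
def intertwiningMap (n : R) (x x' : ℍ[R]) : ℍ[R] →ₗ[R] ℍ[R] :=
  n • .id - .mulLeftRight R (x', x)

theorem intertwiningMap_apply (n : R) (x x' h : ℍ[R]) :
    intertwiningMap n x x' h = n • h - x' * h * x :=
  rfl

theorem intertwiningMap_mul (hx : x * x = -(n : ℍ[R])) (hx' : x' * x' = -(n : ℍ[R]))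
    (h : ℍ[R]) : intertwiningMap n x x' h * x = x' * intertwiningMap n x x' h := by
  calc intertwiningMap n x x' h * x = n • (h * x) - x' * h * (x * x) := by
        rw [intertwiningMap_apply, sub_mul, smul_mul_assoc, mul_assoc _ x x]
    _ = n • (x' * h) - x' * x' * h * x := by
        rw [hx, hx', mul_neg, mul_coe_eq_smul, neg_mul, neg_mul, coe_mul_eq_smul, smul_mul_assoc]
        abel
    _ = x' * intertwiningMap n x x' h := by
        rw [intertwiningMap_apply, mul_sub, mul_smul_comm]
        simp only [mul_assoc]

theorem intertwiningMap_mul_of_anticommute (hw : x * w = -(w * x)) (hw' : x' * w' = -(w' * x'))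
    (hk : k * x = x' * k) (n : R) :
    intertwiningMap n w w' k * x = x' * intertwiningMap n w w' k := by
  have hwx : w * x = -(x * w) := by rw [hw, neg_neg]
  calc intertwiningMap n w w' k * x = n • (k * x) + w' * (k * x) * w := by
        rw [intertwiningMap_apply, sub_mul, smul_mul_assoc, mul_assoc _ w x, hwx]
        noncomm_ring
    _ = n • (x' * k) - x' * w' * k * w := by
        rw [hk, hw']
        noncomm_ring
    _ = x' * intertwiningMap n w w' k := by
        rw [intertwiningMap_apply, mul_sub, mul_smul_comm]
        simp only [mul_assoc]

theorem trace_mulLeftRight_quaternion (a b : ℍ[R]) :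
    LinearMap.trace R ℍ[R] (LinearMap.mulLeftRight R (a, b)) = 4 * a.re * b.re := by
  let e : ℍ[R] ≃ₗ[R] Fin 4 → R := QuaternionAlgebra.linearEquivTuple (-1) 0 (-1)
  have coords (q : ℍ[R]) : e q = ![q.re, q.imI, q.imJ, q.imK] := rfl
  have re_symm (v : Fin 4 → R) : (e.symm v).re = v 0 := rfl
  have imI_symm (v : Fin 4 → R) : (e.symm v).imI = v 1 := rfl
  have imJ_symm (v : Fin 4 → R) : (e.symm v).imJ = v 2 := rfl
  have imK_symm (v : Fin 4 → R) : (e.symm v).imK = v 3 := rfl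
  rw [LinearMap.trace_eq_matrix_trace R (Module.Basis.ofEquivFun e), Matrix.trace,
    Fin.sum_univ_four]
  simp [LinearMap.toMatrix_apply, coords, re_symm, imI_symm, imJ_symm, imK_symm]
  ring

theorem trace_intertwiningMap_comp (n m : R) (x x' w w' : ℍ[R]) :
    LinearMap.trace R ℍ[R] (intertwiningMap m w w' ∘ₗ intertwiningMap n x x') =
      4 * (m * n - m * x'.re * x.re - n * w'.re * w.re + (w' * x').re * (x * w).re) := by
  have expand : intertwiningMap m w w' ∘ₗ intertwiningMap n x x' =
      (m * n) • .id - m • .mulLeftRight R (x', x) - n • .mulLeftRight R (w', w) +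
        .mulLeftRight R (w' * x', x * w) := by
    refine LinearMap.ext fun h => ?_
    calc m • (n • h - x' * h * x) - w' * (n • h - x' * h * x) * w
        = (m * n) • h - m • (x' * h * x) - n • (w' * h * w) + w' * x' * h * (x * w) := by
          rw [mul_sub, sub_mul, mul_smul_comm, smul_mul_assoc, smul_sub, smul_smul]
          simp only [mul_assoc]
          abel
      _ = _ := rfl
  have trace_id : LinearMap.trace R ℍ[R] .id = 4 := by
    have id_eq : (.id : ℍ[R] →ₗ[R] ℍ[R]) = .mulLeftRight R (1, 1) :=
      LinearMap.ext fun h => by simp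
    simp [id_eq, trace_mulLeftRight_quaternion]
  rw [expand]
  simp only [map_add, map_sub, map_smul, trace_mulLeftRight_quaternion, trace_id, smul_eq_mul]
  ring

end Intertwiners

section IntertwinersOrdered

variable {R : Type*} [CommRing R] [LinearOrder R] [IsStrictOrderedRing R] {x y w x' y' w' : ℍ[R]}

theorem exists_ne_zero_intertwiner_of_anticommute (hx : star x = -x) (hx' : star x' = -x')
    (hw : star w = -w) (hw' : star w' = -w') (hxw : x * w = -(w * x))
    (hxw' : x' * w' = -(w' * x')) (nx : normSq x' = normSq x) (nw : normSq w' = normSq w)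
    (hx0 : x ≠ 0) (hw0 : w ≠ 0) :
    ∃ p : ℍ[R], p ≠ 0 ∧ p * x = x' * p ∧ p * w = w' * p := by
  set T := intertwiningMap (normSq w) w w' ∘ₗ intertwiningMap (normSq x) x x' with hT
  have re_eq_zero {a : ℍ[R]} (ha : star a = -a) : a.re = 0 :=
    self_eq_neg.mp ((re_star a).symm.trans (congrArg (·.re) ha))
  have star_mul_eq : star (x * w) = -(x * w) := by
    rw [star_mul, hx, hw, neg_mul_neg, hxw, neg_neg]
  have trace_ne_zero : LinearMap.trace R ℍ[R] T ≠ 0 := by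
    rw [hT, trace_intertwiningMap_comp, re_eq_zero hx, re_eq_zero hw, re_eq_zero star_mul_eq]
    simpa using And.intro hw0 hx0
  obtain ⟨h, hh⟩ : ∃ h, T h ≠ 0 := by
    by_contra! H
    exact trace_ne_zero (by rw [LinearMap.ext (f := T) (g := 0) H, map_zero])
  have sq_x' := nx ▸ mul_self_eq_neg_normSq hx'
  have sq_w' := nw ▸ mul_self_eq_neg_normSq hw'
  exact ⟨T h, hh,
    intertwiningMap_mul_of_anticommute hxw hxw'
      (intertwiningMap_mul (mul_self_eq_neg_normSq hx) sq_x' h) _,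
    intertwiningMap_mul (mul_self_eq_neg_normSq hw) sq_w' _⟩

theorem exists_ne_zero_intertwiner (hx : star x = -x) (hy : star y = -y) (hx' : star x' = -x')
    (hy' : star y' = -y') (nx : normSq x' = normSq x) (ny : normSq y' = normSq y)
    (hre : (x' * y').re = (x * y).re) (hxy : x * y ≠ y * x) :
    ∃ p : ℍ[R], p ≠ 0 ∧ p * x = x' * p ∧ p * y = y' * p := by
  have hx0 : x ≠ 0 := by
    rintro rfl
    simp at hxy
  have hx0' : x' ≠ 0 := by rwa [← normSq_ne_zero, nx, normSq_ne_zero]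
  have two_ne : (2 : ℍ[R]) ≠ 0 := fun h => two_ne_zero (α := R) (congrArg (·.re) h)
  obtain ⟨p, hp, hpx, hpw⟩ := exists_ne_zero_intertwiner_of_anticommute hx hx'
    (star_commutator hx hy) (star_commutator hx' hy') (mul_commutator hx y)
    (mul_commutator hx' y') nx
    (by rw [normSq_commutator hx' hy', normSq_commutator hx hy, nx, ny, hre])
    hx0 (sub_ne_zero.mpr hxy)
  refine ⟨p, hp, hpx, mul_left_cancel₀ (mul_ne_zero two_ne hx0') ?_⟩
  calc 2 * x' * (p * y) = p * (2 * (x * y)) := by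
        rw [mul_assoc, ← mul_assoc x', ← hpx]
        noncomm_ring
    _ = 2 * (x' * y') * p := by
        rw [two_mul_mul_eq_commutator_add hx hy, two_mul_mul_eq_commutator_add hx' hy', hre,
          mul_add, add_mul, hpw, mul_coe_eq_smul, coe_mul_eq_smul]
    _ = 2 * x' * (y' * p) := by simp only [mul_assoc]

end IntertwinersOrdered

section Coordinates

variable {R : Type*} (a b c d : R)

/-- The quaternion `a + b i + c j + d k`, with type `ℍ[R]` rather than `ℍ[R,-1,0,-1]`. -/
def quaternionOfCoords [Zero R] [One R] [Neg R] : ℍ[R] := ⟨a, b, c, d⟩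

variable [CommRing R]

@[simp] theorem re_quaternionOfCoords : (quaternionOfCoords a b c d).re = a := rfl
@[simp] theorem imI_quaternionOfCoords : (quaternionOfCoords a b c d).imI = b := rfl
@[simp] theorem imJ_quaternionOfCoords : (quaternionOfCoords a b c d).imJ = c := rfl
@[simp] theorem imK_quaternionOfCoords : (quaternionOfCoords a b c d).imK = d := rfl

theorem exists_eq_smul_of_dvd {n : R} {q : ℍ[R]} (hre : n ∣ q.re)
    (hI : n ∣ q.imI) (hJ : n ∣ q.imJ) (hK : n ∣ q.imK) : ∃ t : ℍ[R], q = n • t := by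
  obtain ⟨⟨a, ha⟩, ⟨b, hb⟩, ⟨c, hc⟩, ⟨d, hd⟩⟩ := And.intro hre <| And.intro hI <| And.intro hJ hK
  refine ⟨quaternionOfCoords a b c d, ?_⟩
  ext
  exacts [ha, hb, hc, hd]

end Coordinates

section BaseChange

variable {R S : Type*} [CommRing R] [CommRing S]

/-- The ring homomorphism between quaternion rings that applies `f` to the coordinates. -/
def quaternionMap (f : R →+* S) : ℍ[R] →+* ℍ[S] where
  toFun q := quaternionOfCoords (f q.re) (f q.imI) (f q.imJ) (f q.imK)
  map_one' := by ext <;> simp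
  map_zero' := by ext <;> simp
  map_mul' _ _ := by ext <;> simp
  map_add' _ _ := by ext <;> simp

variable (f : R →+* S) (q : ℍ[R]) (r : R)

@[simp] theorem re_quaternionMap : (quaternionMap f q).re = f q.re := rfl
@[simp] theorem imI_quaternionMap : (quaternionMap f q).imI = f q.imI := rfl
@[simp] theorem imJ_quaternionMap : (quaternionMap f q).imJ = f q.imJ := rfl
@[simp] theorem imK_quaternionMap : (quaternionMap f q).imK = f q.imK := rfl

theorem quaternionMap_star : quaternionMap f (star q) = star (quaternionMap f q) := by
  ext <;> simp

theorem quaternionMap_smul : quaternionMap f (r • q) = f r • quaternionMap f q := by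
  ext <;> simp

theorem normSq_quaternionMap : normSq (quaternionMap f q) = f (normSq q) := by
  simp [normSq_def']

theorem IsPrimitiveQuaternion.map {q : ℍ[R]} (hq : IsPrimitiveQuaternion q) (f : R →+* S) :
    IsPrimitiveQuaternion (quaternionMap f q) := by
  obtain ⟨h, hh⟩ := hq
  exact ⟨quaternionMap f h, by rw [← map_mul, re_quaternionMap, hh, map_one]⟩

end BaseChange

section Reduction

/-- Reduction of integral quaternions modulo `N`. -/
abbrev reduceMod (N : ℕ) : ℍ[ℤ] →+* ℍ[ZMod N] :=
  quaternionMap (Int.castRingHom (ZMod N))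

theorem reduceMod_smul (N : ℕ) (r : ℤ) (q : ℍ[ℤ]) :
    reduceMod N (r • q) = (r : ZMod N) • reduceMod N q :=
  quaternionMap_smul _ q r

theorem normSq_reduceMod (N : ℕ) (q : ℍ[ℤ]) :
    normSq (reduceMod N q) = ((normSq q : ℤ) : ZMod N) :=
  normSq_quaternionMap _ q

theorem reduceMod_eq_zero_iff {N : ℕ} {q : ℍ[ℤ]} :
    reduceMod N q = 0 ↔ ∃ r : ℍ[ℤ], q = (N : ℤ) • r := by
  constructor
  · intro h
    simp only [Quaternion.ext_iff, re_quaternionMap, imI_quaternionMap, imJ_quaternionMap,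
      imK_quaternionMap, re_zero, imI_zero, imJ_zero, imK_zero, eq_intCast,
      ZMod.intCast_zmod_eq_zero_iff_dvd] at h
    exact exists_eq_smul_of_dvd h.1 h.2.1 h.2.2.1 h.2.2.2
  · rintro ⟨r, rfl⟩
    rw [reduceMod_smul, Int.cast_natCast, ZMod.natCast_self, zero_smul]

theorem reduceMod_gcd_smul_eq_zero {N : ℕ} {n m : ℤ} {q : ℍ[ℤ]}
    (hn : (n : ZMod N) • reduceMod N q = 0) (hm : (m : ZMod N) • reduceMod N q = 0) :
    reduceMod N ((Int.gcd n m : ℤ) • q) = 0 := by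
  rw [Int.gcd_eq_gcd_ab, reduceMod_smul]
  push_cast
  rw [add_smul, mul_comm, mul_smul, hn, mul_comm, mul_smul, hm, smul_zero, smul_zero, add_zero]

theorem reduceMod_div_gcd_eq_zero {N g : ℕ} (hN : N ≠ 0) {q : ℍ[ℤ]}
    (h : reduceMod N ((g : ℤ) • q) = 0) : reduceMod (N / N.gcd g) q = 0 := by
  obtain ⟨r, hr⟩ := reduceMod_eq_zero_iff.mp h
  obtain ⟨M, k, hMk, hM, hk⟩ := Nat.exists_coprime N g
  set d := N.gcd g
  have hd : d ≠ 0 := Nat.gcd_ne_zero_left hN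
  have key : (k : ℤ) • q = (M : ℤ) • r := by
    refine smul_right_injective _ (Int.natCast_ne_zero.mpr hd) ?_
    simp only [smul_smul]
    rw [hM, hk] at hr
    push_cast at hr
    rwa [mul_comm (d : ℤ), mul_comm (d : ℤ)]
  obtain ⟨a, b, hab⟩ := Nat.isCoprime_iff_coprime.mpr hMk
  have hM' : N / d = M := by rw [hM, Nat.mul_div_cancel _ hd.bot_lt]
  refine reduceMod_eq_zero_iff.mpr ⟨a • q + b • r, ?_⟩
  calc q = (a * M + b * k) • q := by rw [hab, one_smul]
    _ = (M : ℤ) • (a • q + b • r) := by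
        rw [add_smul, mul_smul b, key, mul_comm a, mul_smul, smul_comm b, smul_add]
    _ = _ := by rw [hM']

theorem isUnit_two_zmod_of_odd {N : ℕ} (hN : Odd N) : IsUnit (2 : ZMod N) := by
  exact_mod_cast (ZMod.isUnit_iff_coprime 2 N).mpr (Nat.coprime_two_left.mpr hN)

end Reduction

section NearEuclid

theorem exists_two_mul_sub_mul_sq_le {n : ℤ} (hn : 0 < n) (e : ℤ) :
    ∃ a, (2 * (e - n * a)) ^ 2 ≤ n ^ 2 := by
  refine ⟨(2 * e + n) / (2 * n), sq_le_sq' ?_ ?_⟩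
  · linarith [Int.mul_ediv_self_le (x := 2 * e + n) (k := 2 * n) (by omega)]
  · linarith [Int.lt_mul_ediv_self_add (x := 2 * e + n) (k := 2 * n) (by omega)]

theorem dvd_two_mul_of_two_mul_sub_mul_sq_eq {n e a : ℤ} (h : (2 * (e - n * a)) ^ 2 = n ^ 2) :
    n ∣ 2 * e := by
  rcases sq_eq_sq_iff_eq_or_eq_neg.mp h with h | h
  · exact ⟨2 * a + 1, by linear_combination h⟩
  · exact ⟨2 * a - 1, by linear_combination h⟩

theorem exists_normSq_sub_smul_lt_or_two_smul_eq_smul {n : ℤ} (hn : 0 < n) (s : ℍ[ℤ]) :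
    (∃ t : ℍ[ℤ], normSq (s - n • t) < n ^ 2) ∨ ∃ t : ℍ[ℤ], (2 : ℤ) • s = n • t := by
  choose a ha using exists_two_mul_sub_mul_sq_le hn
  set t := quaternionOfCoords (a s.re) (a s.imI) (a s.imJ) (a s.imK) with ht
  refine or_iff_not_imp_left.mpr fun H => ?_
  have far : n ^ 2 ≤ (s.re - n * a s.re) ^ 2 + (s.imI - n * a s.imI) ^ 2 +
      (s.imJ - n * a s.imJ) ^ 2 + (s.imK - n * a s.imK) ^ 2 := by
    simpa [normSq_def', ht] using not_lt.mp fun h => H ⟨t, h⟩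
  have half (e : ℤ) (h : n ^ 2 ≤ (2 * (e - n * a e)) ^ 2) : n ∣ 2 * e :=
    dvd_two_mul_of_two_mul_sub_mul_sq_eq ((ha e).antisymm h)
  exact exists_eq_smul_of_dvd
    (half s.re (by linarith [ha s.imI, ha s.imJ, ha s.imK]))
    (half s.imI (by linarith [ha s.re, ha s.imJ, ha s.imK]))
    (half s.imJ (by linarith [ha s.re, ha s.imI, ha s.imK]))
    (half s.imK (by linarith [ha s.re, ha s.imI, ha s.imJ]))

theorem exists_normSq_sub_mul_lt_or_two_smul_eq_mul {u : ℍ[ℤ]} (hu : u ≠ 0) (s : ℍ[ℤ]) :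
    (∃ t : ℍ[ℤ], normSq (s - t * u) < normSq u) ∨ ∃ t : ℍ[ℤ], (2 : ℤ) • s = t * u := by
  have hn : 0 < normSq u := normSq_nonneg.lt_of_ne' (normSq_ne_zero.mpr hu)
  refine (exists_normSq_sub_smul_lt_or_two_smul_eq_smul hn (s * star u)).imp ?_ ?_
  · rintro ⟨t, ht⟩
    refine ⟨t, lt_of_mul_lt_mul_right ?_ hn.le⟩
    calc normSq (s - t * u) * normSq u = normSq (s * star u - normSq u • t) := by
          rw [← normSq_star u, ← map_mul, sub_mul, mul_assoc, self_mul_star, mul_coe_eq_smul,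
            normSq_star]
      _ < normSq u * normSq u := by rwa [← sq]
  · rintro ⟨t, ht⟩
    refine ⟨t, smul_right_injective _ hn.ne' ?_⟩
    calc normSq u • (2 : ℤ) • s = (2 : ℤ) • (s * star u) * u := by
          rw [smul_mul_assoc, mul_assoc, star_mul_self, mul_coe_eq_smul, smul_comm]
      _ = normSq u • (t * u) := by rw [ht, smul_mul_assoc]

/-- Division with remainder fails in `ℍ[ℤ]` only for quotients all of whose coordinates are
half-integers, so doubling replaces the principality of left ideals. -/
theorem exists_mem_forall_two_smul_eq_mul (I : Ideal ℍ[ℤ]) :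
    ∃ u ∈ I, ∀ s ∈ I, ∃ t : ℍ[ℤ], (2 : ℤ) • s = t * u := by
  rcases eq_or_ne I ⊥ with rfl | hI
  · exact ⟨0, zero_mem _, fun s hs => ⟨0, by rw [Ideal.mem_bot.mp hs, smul_zero, mul_zero]⟩⟩
  obtain ⟨u, ⟨hu, hu0⟩, hmin⟩ := exists_minimalFor_of_wellFoundedLT
    (fun u => u ∈ I ∧ u ≠ 0) (fun u => (normSq u).toNat) (Submodule.exists_mem_ne_zero_of_ne_bot hI)
  refine ⟨u, hu, fun s hs => ?_⟩
  obtain ⟨t, ht⟩ | h := exists_normSq_sub_mul_lt_or_two_smul_eq_mul hu0 s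
  · by_cases hst : s - t * u = 0
    · exact ⟨(2 : ℤ) • t, by rw [sub_eq_zero.mp hst, smul_mul_assoc]⟩
    · have hlt : (normSq (s - t * u)).toNat < (normSq u).toNat := by
        have := normSq_nonneg (a := s - t * u)
        omega
      exact absurd (hmin ⟨I.sub_mem hs (I.mul_mem_left t hu), hst⟩ hlt.le) hlt.not_ge
  · exact h

end NearEuclid

section Integral

theorem exists_eq_smul_isPrimitiveQuaternion {p : ℍ[ℤ]} (hp : p ≠ 0) :
    ∃ (d : ℕ) (q : ℍ[ℤ]), d ≠ 0 ∧ p = (d : ℤ) • q ∧ IsPrimitiveQuaternion q := by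
  let f := ![p.re, p.imI, p.imJ, p.imK]
  obtain ⟨v, hv, hv1⟩ := Finset.univ.extract_gcd f Finset.univ_nonempty
  obtain ⟨c, hc⟩ := Finset.univ.gcd_eq_sum_mul v
  obtain ⟨d, hd⟩ := Int.eq_ofNat_of_zero_le
    (Int.nonneg_of_normalize_eq_self (Finset.univ.normalize_gcd (f := f)))
  simp only [hd, Finset.mem_univ, true_imp_iff] at hv
  have hpv : p = (d : ℤ) • quaternionOfCoords (v 0) (v 1) (v 2) (v 3) := by
    ext
    exacts [hv 0, hv 1, hv 2, hv 3]
  refine ⟨d, quaternionOfCoords (v 0) (v 1) (v 2) (v 3), ?_, hpv,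
    quaternionOfCoords (c 0) (-c 1) (-c 2) (-c 3), ?_⟩
  · rintro rfl
    exact hp (by rw [hpv, Nat.cast_zero, zero_smul])
  · rw [hv1, Fin.sum_univ_four] at hc
    simp only [re_mul, re_quaternionOfCoords, imI_quaternionOfCoords, imJ_quaternionOfCoords,
      imK_quaternionOfCoords]
    linear_combination -hc

theorem exists_isPrimitiveQuaternion_intertwiner {x y x' y' : ℍ[ℤ]} (hx : star x = -x)
    (hy : star y = -y) (hx' : star x' = -x') (hy' : star y' = -y')
    (nx : normSq x' = normSq x) (ny : normSq y' = normSq y)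
    (hre : (x' * y').re = (x * y).re) (hxy : x * y ≠ y * x) :
    ∃ q : ℍ[ℤ], IsPrimitiveQuaternion q ∧ q * x = x' * q ∧ q * y = y' * q := by
  obtain ⟨p, hp, hpx, hpy⟩ := exists_ne_zero_intertwiner hx hy hx' hy' nx ny hre hxy
  obtain ⟨d, q, hd, rfl, hq⟩ := exists_eq_smul_isPrimitiveQuaternion hp
  rw [smul_mul_assoc, mul_smul_comm] at hpx hpy
  have cancel := smul_right_injective ℍ[ℤ] (Int.natCast_ne_zero.mpr hd)
  exact ⟨q, hq, cancel hpx, cancel hpy⟩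

end Integral

section OddPart

theorem two_dvd_of_eight_dvd_sum_four_sq {a b c d : ℤ} (h : 8 ∣ a ^ 2 + b ^ 2 + c ^ 2 + d ^ 2) :
    2 ∣ a ∧ 2 ∣ b ∧ 2 ∣ c ∧ 2 ∣ d := by
  have sq_mod (x : ℤ) : 2 ∣ x ∧ 4 ∣ x ^ 2 ∨ 8 ∣ x ^ 2 - 1 := by
    rcases x.even_or_odd with hx | hx
    · exact .inl ⟨hx.two_dvd, pow_dvd_pow_of_dvd hx.two_dvd 2⟩
    · exact .inr (Int.eight_dvd_sq_sub_one_of_odd hx)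
  have := sq_mod a
  have := sq_mod b
  have := sq_mod c
  have := sq_mod d
  omega

namespace IsPrimitiveQuaternion

variable {q x x' y y' : ℍ[ℤ]}

theorem not_eight_dvd_normSq (hq : IsPrimitiveQuaternion q) : ¬ 8 ∣ normSq q := by
  intro h
  rw [normSq_def'] at h
  obtain ⟨h₀, h₁, h₂, h₃⟩ := two_dvd_of_eight_dvd_sum_four_sq h
  exact (hq.map _).ne_zero
    (reduceMod_eq_zero_iff (N := 2).mpr (exists_eq_smul_of_dvd h₀ h₁ h₂ h₃))

theorem exists_eq_mul_odd_of_normSq_eq (hq : IsPrimitiveQuaternion q) {b : ℕ}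
    (hb : normSq q = b) : ∃ c N : ℕ, c ∣ 4 ∧ Odd N ∧ b = c * N := by
  have hb0 : b ≠ 0 := by
    rintro rfl
    exact hq.ne_zero (normSq_eq_zero.mp hb)
  obtain ⟨k, N, hN, rfl⟩ := Nat.exists_eq_two_pow_mul_odd hb0
  refine ⟨2 ^ k, N, ?_, hN, rfl⟩
  have hk : k ≤ 2 := by
    by_contra! hk
    refine hq.not_eight_dvd_normSq ?_
    rw [hb]
    exact_mod_cast (pow_dvd_pow 2 hk).mul_right N
  exact pow_dvd_pow 2 hk

theorem exists_reduceMod_mul_eq_smul (hq : IsPrimitiveQuaternion q) {N : ℕ} (hN : Odd N)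
    (hdvd : (N : ℤ) ∣ normSq q) (hx : q * x = x' * q) :
    ∃ l : ZMod N, reduceMod N q * reduceMod N x = l • reduceMod N q := by
  have hker : reduceMod N q * star (reduceMod N q) = 0 := by
    rw [self_mul_star, normSq_reduceMod, (ZMod.intCast_zmod_eq_zero_iff_dvd _ _).mpr hdvd, coe_zero]
  refine (hq.map _).exists_mul_eq_smul (isUnit_two_zmod_of_odd hN) hker ?_
  rw [← map_mul, hx, map_mul, mul_assoc, hker, mul_zero]

theorem normSq_dvd_four_mul_normSq_commutator (hq : IsPrimitiveQuaternion q)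
    (hx : q * x = x' * q) (hy : q * y = y' * q) :
    normSq q ∣ 4 * normSq (x * y - y * x) := by
  obtain ⟨b, hb⟩ := Int.eq_ofNat_of_zero_le (normSq_nonneg (a := q))
  obtain ⟨c, N, hc, hN, rfl⟩ := hq.exists_eq_mul_odd_of_normSq_eq hb
  have hdvd : (N : ℤ) ∣ normSq q := hb ▸ Int.natCast_dvd_natCast.mpr (dvd_mul_left N c)
  obtain ⟨l, hl⟩ := hq.exists_reduceMod_mul_eq_smul hN hdvd hx
  obtain ⟨m, hm⟩ := hq.exists_reduceMod_mul_eq_smul hN hdvd hy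
  have hN_dvd : (N : ℤ) ∣ normSq (x * y - y * x) := by
    rw [← ZMod.intCast_zmod_eq_zero_iff_dvd, ← normSq_reduceMod, map_sub, map_mul, map_mul]
    exact (hq.map _).normSq_commutator_eq_zero hl hm
  rw [hb, Int.natCast_mul]
  exact mul_dvd_mul (Int.natCast_dvd_natCast.mpr hc) hN_dvd

theorem dvd_normSq_of_reduceMod_mul_star_eq_zero (hq : IsPrimitiveQuaternion q) {M : ℕ}
    (hM : Odd M) (hx : reduceMod M (x * star q) = 0) : (M : ℤ) ∣ normSq x := by
  rw [map_mul, quaternionMap_star] at hx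
  have h2 := (hq.map _).two_smul_mul_star_eq_zero hx hx
  rw [self_mul_star, normSq_reduceMod] at h2
  rw [← ZMod.intCast_zmod_eq_zero_iff_dvd, ← (isUnit_two_zmod_of_odd hM).mul_right_eq_zero]
  exact congrArg (fun z => z.re) h2

end IsPrimitiveQuaternion

theorem reduceMod_div_gcd_mul_star_eq_zero {N : ℕ} (hN : Odd N) {q q' q₀ x y : ℍ[ℤ]}
    {l l' l₀ m m' m₀ : ZMod N} (hsx : star x = -x) (hsy : star y = -y)
    (hq : IsPrimitiveQuaternion q) (hq' : IsPrimitiveQuaternion q')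
    (hq₀ : IsPrimitiveQuaternion q₀)
    (hx : reduceMod N q * reduceMod N x = l • reduceMod N q)
    (hx' : reduceMod N q' * reduceMod N x = l' • reduceMod N q')
    (hx₀ : reduceMod N q₀ * reduceMod N x = l₀ • reduceMod N q₀)
    (hy : reduceMod N q * reduceMod N y = m • reduceMod N q)
    (hy' : reduceMod N q' * reduceMod N y = m' • reduceMod N q')
    (hy₀ : reduceMod N q₀ * reduceMod N y = m₀ • reduceMod N q₀)
    (hl : Associated (l + l₀) (l' + l₀)) (hm : Associated (m + m₀) (m' + m₀)) :
    reduceMod (N / N.gcd (Int.gcd (normSq x) (normSq y))) (q * star q') = 0 := by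
  have h2 := isUnit_two_zmod_of_odd hN
  have star_eq {z : ℍ[ℤ]} (hz : star z = -z) : star (reduceMod N z) = -reduceMod N z := by
    rw [← quaternionMap_star, hz, map_neg]
  refine reduceMod_div_gcd_eq_zero hN.pos.ne' (reduceMod_gcd_smul_eq_zero ?_ ?_) <;>
    rw [map_mul, quaternionMap_star, ← normSq_reduceMod]
  · exact normSq_smul_mul_star_eq_zero h2 (star_eq hsx) (hq.map _) (hq'.map _) (hq₀.map _)
      hx hx' hx₀ hl
  · exact normSq_smul_mul_star_eq_zero h2 (star_eq hsy) (hq.map _) (hq'.map _) (hq₀.map _)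
      hy hy' hy₀ hm

end OddPart

section Spheres

theorem coord_mem_Icc_of_normSq_eq {a : ℕ} {q : ℍ[ℤ]} (hq : normSq q = a) (i : Fin 4) :
    equivTuple ℤ q i ∈ Finset.Icc (-a.sqrt : ℤ) a.sqrt := by
  have hsq : equivTuple ℤ q i ^ 2 ≤ a := by
    rw [← hq, normSq_def']
    fin_cases i <;> dsimp <;>
      linarith [sq_nonneg q.re, sq_nonneg q.imI, sq_nonneg q.imJ, sq_nonneg q.imK]
  rw [Finset.mem_Icc, ← abs_le, Int.abs_eq_natAbs, Int.ofNat_le, Nat.le_sqrt']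
  zify
  rwa [sq_abs]

theorem finite_normSq_eq (a : ℕ) : {q : ℍ[ℤ] | normSq q = a}.Finite :=
  (Set.Finite.pi' fun _ : Fin 4 => (Finset.Icc (-a.sqrt : ℤ) a.sqrt).finite_toSet).preimage
    (equivTuple ℤ).injective.injOn |>.subset fun _ => coord_mem_Icc_of_normSq_eq

/-- The integral quaternions of norm `a`. -/
noncomputable def normSqSphere (a : ℕ) : Finset ℍ[ℤ] :=
  (finite_normSq_eq a).toFinset

theorem mem_normSqSphere {a : ℕ} {q : ℍ[ℤ]} : q ∈ normSqSphere a ↔ normSq q = a := by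
  simp [normSqSphere]

theorem exists_card_le_card_normSqSphere {M k : ℕ} (hM : Odd M) (hk : k ≠ 0) {q₁ : ℍ[ℤ]}
    (hq₁ : IsPrimitiveQuaternion q₁) (hn : normSq q₁ = (M * k : ℕ)) {S : Finset ℍ[ℤ]}
    (hS : ∀ q ∈ S, normSq q = (M * k : ℕ) ∧ reduceMod M (q * star q₁) = 0) :
    ∃ a ≠ 0, a ≤ 4 * k ∧ S.card ≤ (normSqSphere a).card := by
  let I : Ideal ℍ[ℤ] :=
    (Ideal.torsionOf ℍ[ZMod M] ℍ[ZMod M] (star (reduceMod M q₁))).comap (reduceMod M)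
  have mem_I {q : ℍ[ℤ]} : q ∈ I ↔ reduceMod M (q * star q₁) = 0 := by
    rw [map_mul, quaternionMap_star]
    rfl
  have hq₁I : q₁ ∈ I := by
    rw [mem_I, map_mul, quaternionMap_star, self_mul_star, normSq_reduceMod, hn]
    simp
  obtain ⟨u, hu, ht⟩ := exists_mem_forall_two_smul_eq_mul I
  choose! t ht using ht
  have hMu := hq₁.dvd_normSq_of_reduceMod_mul_star_eq_zero hM (mem_I.mp hu)
  obtain ⟨w, hw⟩ : ∃ w : ℕ, normSq u = (M * w : ℕ) := by
    obtain ⟨n, hn⟩ := Int.eq_ofNat_of_zero_le (normSq_nonneg (a := u))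
    rw [hn] at hMu ⊢
    exact (Int.natCast_dvd_natCast.mp hMu).imp fun _ => congrArg _
  have norm_t {q : ℍ[ℤ]} (hq : q ∈ I) (hn : normSq q = (M * k : ℕ)) :
      normSq (t q) * w = (4 * k : ℕ) := by
    have hMul : normSq (t q) * normSq u = 4 * normSq q := by
      rw [← map_mul, ← ht q hq, normSq_smul]
      norm_num
    refine mul_left_cancel₀ (Int.natCast_ne_zero.mpr hM.pos.ne') ?_
    rw [hw, hn] at hMul
    push_cast at hMul ⊢
    linear_combination hMul
  obtain ⟨a, ha⟩ := Int.eq_ofNat_of_zero_le (normSq_nonneg (a := t q₁))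
  have haw : a * w = 4 * k := by exact_mod_cast ha ▸ norm_t hq₁I hn
  have hw0 : w ≠ 0 := right_ne_zero_of_mul (haw ▸ mul_ne_zero four_ne_zero hk)
  refine ⟨a, left_ne_zero_of_mul (haw ▸ mul_ne_zero four_ne_zero hk),
    haw ▸ Nat.le_mul_of_pos_right a hw0.bot_lt,
    Finset.card_le_card_of_injOn t (fun q hq => mem_normSqSphere.mpr ?_) fun q hq q' hq' htt => ?_⟩
  · refine mul_right_cancel₀ (Int.natCast_ne_zero.mpr hw0) ?_
    rw [norm_t (mem_I.mpr (hS q hq).2) (hS q hq).1, ← haw, Nat.cast_mul]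
  · refine smul_right_injective _ (two_ne_zero' ℤ) ?_
    calc (2 : ℤ) • q = t q * u := ht q (mem_I.mpr (hS q hq).2)
      _ = (2 : ℤ) • q' := by rw [htt, ht q' (mem_I.mpr (hS q' hq').2)]

end Spheres

section Intertwiners

variable {x y : ℍ[ℤ]} {B : ℕ} {S : Finset ℍ[ℤ]}

theorem card_le_of_reduceMod_mul_star_eq_zero {c N g : ℕ} (hc : c ∣ 4) (hN : Odd N) (hg : g ≠ 0)
    (hB : ∀ a ≠ 0, a ≤ 16 * g → (normSqSphere a).card ≤ B)
    (hprim : ∀ q ∈ S, IsPrimitiveQuaternion q) (hnorm : ∀ q ∈ S, normSq q = (c * N : ℕ))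
    (hS : ∀ q ∈ S, ∀ q' ∈ S, reduceMod (N / N.gcd g) (q * star q') = 0) : S.card ≤ B := by
  rcases S.eq_empty_or_nonempty with rfl | ⟨q₁, hq₁⟩
  · exact Nat.zero_le B
  have hMk : N / N.gcd g * N.gcd g = N := Nat.div_mul_cancel (N.gcd_dvd_left g)
  have hcN : c * N = N / N.gcd g * (c * N.gcd g) := by rw [mul_left_comm, hMk]
  have hk : c * N.gcd g ≠ 0 := mul_ne_zero (ne_zero_of_dvd_ne_zero four_ne_zero hc)
    (Nat.gcd_pos_of_pos_left g hN.pos).ne'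
  obtain ⟨a, ha0, ha, hcard⟩ := exists_card_le_card_normSqSphere
    (Nat.odd_mul.mp (hMk ▸ hN)).1 hk (hprim q₁ hq₁) (hcN ▸ hnorm q₁ hq₁)
    fun q hq => ⟨hcN ▸ hnorm q hq, hS q hq q₁ hq₁⟩
  refine hcard.trans (hB a ha0 ?_)
  calc a ≤ 4 * (c * N.gcd g) := ha
    _ ≤ 4 * (4 * g) := by
      gcongr
      · exact Nat.le_of_dvd four_pos hc
      · exact Nat.gcd_le_right N hg.bot_lt
    _ = 16 * g := by ring

theorem card_intertwiners_of_normSq_eq_le {b : ℕ} (hsx : star x = -x) (hsy : star y = -y)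
    (hg : Int.gcd (normSq x) (normSq y) ≠ 0)
    (hB : ∀ a ≠ 0, a ≤ 16 * Int.gcd (normSq x) (normSq y) → (normSqSphere a).card ≤ B)
    (hprim : ∀ q ∈ S, IsPrimitiveQuaternion q) (hnorm : ∀ q ∈ S, normSq q = b)
    (hx : ∀ q ∈ S, ∃ x', q * x = x' * q) (hy : ∀ q ∈ S, ∃ y', q * y = y' * q) :
    S.card ≤ B * b.divisors.card ^ 2 := by
  classical
  rcases S.eq_empty_or_nonempty with rfl | ⟨q₀, hq₀⟩
  · exact Nat.zero_le _
  obtain ⟨c, N, hc, hN, rfl⟩ := (hprim q₀ hq₀).exists_eq_mul_odd_of_normSq_eq (hnorm q₀ hq₀)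
  have hdvd : ∀ q ∈ S, (N : ℤ) ∣ normSq q := fun q hq =>
    hnorm q hq ▸ Int.natCast_dvd_natCast.mpr (dvd_mul_left N c)
  have exists_eigenvalue {z : ℍ[ℤ]} (hz : ∀ q ∈ S, ∃ z', q * z = z' * q) (q) (hq : q ∈ S) :
      ∃ l : ZMod N, reduceMod N q * reduceMod N z = l • reduceMod N q :=
    (hz q hq).elim fun _ hz' => (hprim q hq).exists_reduceMod_mul_eq_smul hN (hdvd q hq) hz'
  choose! l hl using exists_eigenvalue hx
  choose! m hm using exists_eigenvalue hy
  obtain ⟨δ, hδ, hassoc⟩ := exists_divisors_valued_associated_of_eq hN.pos.ne'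
  have hcN : c * N ≠ 0 := mul_ne_zero (ne_zero_of_dvd_ne_zero four_ne_zero hc) hN.pos.ne'
  have hδ' (z : ZMod N) : δ z ∈ (c * N).divisors :=
    Nat.divisors_subset_of_dvd hcN (dvd_mul_left N c) (hδ z)
  rw [sq, ← Finset.card_product]
  refine Finset.card_le_mul_card_image_of_maps_to
    (f := fun q => (δ (l q + l q₀), δ (m q + m q₀)))
    (fun q _ => Finset.mem_product.mpr ⟨hδ' _, hδ' _⟩) B fun d _ => ?_
  have hF {q} (hq : q ∈ S.filter fun q => (δ (l q + l q₀), δ (m q + m q₀)) = d) :=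
    Finset.mem_filter.mp hq
  refine card_le_of_reduceMod_mul_star_eq_zero hc hN hg hB (fun q hq => hprim q (hF hq).1)
    (fun q hq => hnorm q (hF hq).1) fun q hq q' hq' => ?_
  obtain ⟨hq, hqd⟩ := hF hq
  obtain ⟨hq', hqd'⟩ := hF hq'
  obtain ⟨hlq, hmq⟩ := Prod.ext_iff.mp (hqd.trans hqd'.symm)
  exact reduceMod_div_gcd_mul_star_eq_zero hN hsx hsy (hprim q hq) (hprim q' hq') (hprim q₀ hq₀)
    (hl q hq) (hl q' hq') (hl q₀ hq₀) (hm q hq) (hm q' hq') (hm q₀ hq₀)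
    (hassoc _ _ hlq) (hassoc _ _ hmq)

theorem card_primitive_intertwiners_le {E : ℕ} (hsx : star x = -x) (hsy : star y = -y)
    (hE : 4 * normSq (x * y - y * x) = E) (hE0 : E ≠ 0)
    (hB : ∀ a ≠ 0, a ≤ 16 * Int.gcd (normSq x) (normSq y) → (normSqSphere a).card ≤ B)
    (hprim : ∀ q ∈ S, IsPrimitiveQuaternion q)
    (hx : ∀ q ∈ S, ∃ x', q * x = x' * q) (hy : ∀ q ∈ S, ∃ y', q * y = y' * q) :
    S.card ≤ B * E.divisors.card ^ 3 := by
  have hg : Int.gcd (normSq x) (normSq y) ≠ 0 := by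
    intro hg
    obtain ⟨hx0, -⟩ := Int.gcd_eq_zero_iff.mp hg
    rw [normSq_eq_zero] at hx0
    apply hE0
    simpa [hx0] using hE.symm
  have hdiv : ∀ q ∈ S, (normSq q).toNat ∈ E.divisors := by
    intro q hq
    obtain ⟨x', hx'⟩ := hx q hq
    obtain ⟨y', hy'⟩ := hy q hq
    refine Nat.mem_divisors.mpr ⟨?_, hE0⟩
    zify
    rw [Int.toNat_of_nonneg normSq_nonneg, ← hE]
    exact (hprim q hq).normSq_dvd_four_mul_normSq_commutator hx' hy'
  rw [pow_succ, ← mul_assoc]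
  refine Finset.card_le_mul_card_image_of_maps_to hdiv _ fun b hb => ?_
  have hF {q} (hq : q ∈ S.filter fun q => (normSq q).toNat = b) := Finset.mem_filter.mp hq
  calc (S.filter fun q => (normSq q).toNat = b).card ≤ B * b.divisors.card ^ 2 :=
        card_intertwiners_of_normSq_eq_le hsx hsy hg hB (fun q hq => hprim q (hF hq).1)
          (fun q hq => by rw [← (hF hq).2, Int.toNat_of_nonneg normSq_nonneg])
          (fun q hq => hx q (hF hq).1) fun q hq => hy q (hF hq).1
    _ ≤ B * E.divisors.card ^ 2 := by
      gcongr
      exact Nat.dvd_of_mem_divisors hb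

theorem exists_eq_smul_isPrimitiveQuaternion_commute {q : ℍ[ℤ]} (hq : q ≠ 0) (hx : Commute q x) :
    ∃ (d : ℕ) (p : ℍ[ℤ]),
      d ≠ 0 ∧ q = (d : ℤ) • p ∧ IsPrimitiveQuaternion p ∧ Commute p x := by
  obtain ⟨d, p, hd, rfl, hp⟩ := exists_eq_smul_isPrimitiveQuaternion hq
  refine ⟨d, p, hd, rfl, hp, smul_right_injective _ (Int.natCast_ne_zero.mpr hd) ?_⟩
  dsimp only
  rw [← smul_mul_assoc, ← mul_smul_comm, hx.eq]

theorem card_commuting_of_normSq_eq_le {b : ℕ} (hb : b ≠ 0) (hsx : star x = -x) (hx0 : x ≠ 0)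
    (hB : ∀ a ≠ 0, a ≤ 16 * (normSq x).natAbs → (normSqSphere a).card ≤ B)
    (hnorm : ∀ q ∈ S, normSq q = b) (hx : ∀ q ∈ S, Commute q x) :
    S.card ≤ B * b.divisors.card ^ 3 := by
  classical
  have hq0 : ∀ q ∈ S, q ≠ 0 := by
    rintro q hq rfl
    simpa [hb, eq_comm] using hnorm 0 hq
  have hsplit := fun q hq => exists_eq_smul_isPrimitiveQuaternion_commute (hq0 q hq) (hx q hq)
  choose! d p hd hqp hp hpx using hsplit
  have hnorm_p : ∀ q ∈ S, ((d q ^ 2 : ℕ) : ℤ) * normSq (p q) = b := fun q hq => by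
    rw [Nat.cast_pow, ← normSq_smul, ← hqp q hq, hnorm q hq]
  have hdiv : ∀ q ∈ S, d q ^ 2 ∈ b.divisors := fun q hq =>
    Nat.mem_divisors.mpr ⟨Int.natCast_dvd_natCast.mp ⟨_, (hnorm_p q hq).symm⟩, hb⟩
  rw [pow_succ, ← mul_assoc]
  refine Finset.card_le_mul_card_image_of_maps_to hdiv _ fun e he => ?_
  have hF {q} (hq : q ∈ S.filter fun q => d q ^ 2 = e) := Finset.mem_filter.mp hq
  have hp_inj : Set.InjOn p (S.filter fun q => d q ^ 2 = e) := fun q hq q' hq' h => by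
    have hdd : d q = d q' :=
      Nat.pow_left_injective two_ne_zero ((hF hq).2.trans (hF hq').2.symm)
    rw [hqp q (hF hq).1, hqp q' (hF hq').1, hdd, h]
  have hnorm_p' : ∀ q ∈ S.filter fun q => d q ^ 2 = e, normSq (p q) = (b / e : ℕ) := by
    intro q hq
    obtain ⟨hqS, rfl⟩ := hF hq
    rw [Int.natCast_div, ← hnorm_p q hqS, Int.mul_ediv_cancel_left]
    exact Int.natCast_ne_zero.mpr (pow_ne_zero 2 (hd q hqS))
  rw [← Finset.card_image_of_injOn hp_inj]
  calc ((S.filter fun q => d q ^ 2 = e).image p).card ≤ B * (b / e).divisors.card ^ 2 := by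
        refine card_intertwiners_of_normSq_eq_le hsx hsx ?_ ?_ ?_ ?_ ?_ ?_ <;>
          simp only [Finset.forall_mem_image, Int.gcd_self]
        · exact Int.natAbs_ne_zero.mpr (normSq_ne_zero.mpr hx0)
        · exact hB
        · exact fun q hq => hp q (hF hq).1
        · exact hnorm_p'
        · exact fun q hq => ⟨x, hpx q (hF hq).1⟩
        · exact fun q hq => ⟨x, hpx q (hF hq).1⟩
    _ ≤ B * b.divisors.card ^ 2 := by
      gcongr
      exact Nat.div_dvd_of_dvd (Nat.dvd_of_mem_divisors he)

end Intertwiners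

section SphereBounds

variable {ε : ℝ}

theorem exists_card_commuting_le_rpow (hε : 0 < ε) {x : ℍ[ℤ]} (hsx : star x = -x) (hx0 : x ≠ 0) :
    ∃ C : ℝ, 1 ≤ C ∧ ∀ b : ℕ, b ≠ 0 → ∀ S : Finset ℍ[ℤ],
      (∀ q ∈ S, normSq q = b ∧ Commute q x) → (S.card : ℝ) ≤ C * (b : ℝ) ^ ε := by
  obtain ⟨C, hC1, hC⟩ := exists_card_divisors_le_rpow (show 0 < ε / 3 by positivity)
  let B := (Finset.range (16 * (normSq x).natAbs + 1)).sup fun a => (normSqSphere a).card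
  have hB : ∀ a ≠ 0, a ≤ 16 * (normSq x).natAbs → (normSqSphere a).card ≤ B := fun a _ ha =>
    Finset.le_sup (f := fun a => (normSqSphere a).card) (Finset.mem_range_succ_iff.mpr ha)
  refine ⟨(B + 1) * C ^ 3, one_le_mul_of_one_le_of_one_le (by simp) (one_le_pow₀ hC1),
    fun b hb S hS => ?_⟩
  calc (S.card : ℝ) ≤ B * b.divisors.card ^ 3 := by
        exact_mod_cast card_commuting_of_normSq_eq_le hb hsx hx0 hB (fun q hq => (hS q hq).1)
          fun q hq => (hS q hq).2
    _ ≤ (B + 1) * (C * (b : ℝ) ^ (ε / 3)) ^ 3 := by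
      gcongr
      · exact le_add_of_nonneg_right zero_le_one
      · exact hC b hb
    _ = (B + 1) * C ^ 3 * (b : ℝ) ^ ε := by
      rw [mul_pow, ← mul_assoc, ← Real.rpow_mul_natCast b.cast_nonneg]
      norm_num

theorem exists_card_complexes_le_rpow (hε : 0 < ε) :
    ∃ C : ℝ, 1 ≤ C ∧ ∀ a : ℕ, a ≠ 0 → ∀ b ≤ a, ∀ S : Finset ℍ[ℤ],
      (∀ q ∈ S, normSq q = b ∧ q.imJ = 0 ∧ q.imK = 0) → (S.card : ℝ) ≤ C * (a : ℝ) ^ ε := by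
  let i : ℍ[ℤ] := quaternionOfCoords 0 1 0 0
  have hi : star i = -i := by ext <;> simp [i]
  have hi0 : i ≠ 0 := fun h => one_ne_zero (congrArg (fun q => q.imI) h)
  obtain ⟨C, hC1, hC⟩ := exists_card_commuting_le_rpow hε hi hi0
  refine ⟨C, hC1, fun a ha b hb S hS => ?_⟩
  rcases eq_or_ne b 0 with rfl | hb0
  · have ha1 : (1 : ℝ) ≤ a := Nat.one_le_cast.mpr ha.bot_lt
    calc (S.card : ℝ) ≤ (1 : ℕ) := by
          refine Nat.cast_le.mpr (Finset.card_le_one_iff_subset_singleton.mpr ⟨0, fun q hq => ?_⟩)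
          exact Finset.mem_singleton.mpr (normSq_eq_zero.mp (hS q hq).1)
      _ ≤ C * (a : ℝ) ^ ε := by
        rw [Nat.cast_one]
        exact one_le_mul_of_one_le_of_one_le hC1 (Real.one_le_rpow ha1 hε.le)
  · have hcomm : ∀ q ∈ S, Commute q i := fun q hq => by
      obtain ⟨-, hJ, hK⟩ := hS q hq
      ext <;> simp [i, hJ, hK]
    calc (S.card : ℝ) ≤ C * (b : ℝ) ^ ε := hC b hb0 S fun q hq => ⟨(hS q hq).1, hcomm q hq⟩
      _ ≤ C * (a : ℝ) ^ ε := by gcongr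

theorem card_Icc_sqrt_product_le {a : ℕ} (ha : a ≠ 0) :
    (Finset.Icc (-a.sqrt : ℤ) a.sqrt ×ˢ Finset.Icc (-a.sqrt : ℤ) a.sqrt).card ≤ 9 * a := by
  have hcard : ((a.sqrt : ℤ) + 1 - -a.sqrt).toNat = 2 * a.sqrt + 1 := by omega
  have h1 : 1 ≤ a.sqrt := Nat.le_sqrt'.mpr (Nat.one_le_iff_ne_zero.mpr (by simpa))
  rw [Finset.card_product, Int.card_Icc, hcard]
  calc (2 * a.sqrt + 1) * (2 * a.sqrt + 1) ≤ (3 * a.sqrt) * (3 * a.sqrt) := by gcongr <;> omega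
    _ = 9 * (a.sqrt * a.sqrt) := by ring
    _ ≤ 9 * a := by gcongr; exact a.sqrt_le

theorem exists_card_normSqSphere_filter_le_rpow (hε : 0 < ε) :
    ∃ C : ℝ, 1 ≤ C ∧ ∀ a : ℕ, a ≠ 0 → ∀ p : ℤ × ℤ,
      (((normSqSphere a).filter fun q => (q.imJ, q.imK) = p).card : ℝ) ≤ C * (a : ℝ) ^ ε := by
  classical
  obtain ⟨C, hC1, hC⟩ := exists_card_complexes_le_rpow hε
  refine ⟨C, hC1, fun a ha p => ?_⟩
  let w := quaternionOfCoords 0 0 p.1 p.2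
  have hF {q} (hq : q ∈ (normSqSphere a).filter fun q => (q.imJ, q.imK) = p) :
      normSq q = a ∧ q.imJ = p.1 ∧ q.imK = p.2 := by
    simpa [mem_normSqSphere, Prod.ext_iff] using hq
  rw [← Finset.card_image_of_injective _ (sub_left_injective (b := w))]
  refine hC a ha (a - p.1 ^ 2 - p.2 ^ 2).toNat ?_ _ ?_
  · rw [Int.toNat_le]
    linarith [sq_nonneg p.1, sq_nonneg p.2]
  · refine Finset.forall_mem_image.mpr fun q hq => ?_
    obtain ⟨hn, hJ, hK⟩ := hF hq
    have hsub : normSq (q - w) = a - p.1 ^ 2 - p.2 ^ 2 := by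
      rw [← hn, normSq_def', normSq_def']
      simp [w, hJ, hK]
      ring
    refine ⟨?_, by simp [w, hJ], by simp [w, hK]⟩
    rw [hsub, Int.toNat_of_nonneg (hsub ▸ normSq_nonneg)]

theorem exists_card_normSqSphere_le_rpow (hε : 0 < ε) :
    ∃ C : ℝ, 1 ≤ C ∧ ∀ a : ℕ, a ≠ 0 → ((normSqSphere a).card : ℝ) ≤ C * a * (a : ℝ) ^ ε := by
  obtain ⟨C, hC1, hC⟩ := exists_card_normSqSphere_filter_le_rpow hε
  refine ⟨9 * C, by linarith, fun a ha => ?_⟩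
  let I := Finset.Icc (-a.sqrt : ℤ) a.sqrt
  have hbox : ∀ q ∈ normSqSphere a, (q.imJ, q.imK) ∈ I ×ˢ I := fun q hq =>
    have hI := coord_mem_Icc_of_normSq_eq (mem_normSqSphere.mp hq)
    Finset.mem_product.mpr ⟨hI 2, hI 3⟩
  calc ((normSqSphere a).card : ℝ)
      = ∑ p ∈ I ×ˢ I, (((normSqSphere a).filter fun q => (q.imJ, q.imK) = p).card : ℝ) := by
        exact_mod_cast Finset.card_eq_sum_card_fiberwise hbox
    _ ≤ ∑ _ ∈ I ×ˢ I, C * (a : ℝ) ^ ε := Finset.sum_le_sum fun p _ => hC a ha p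
    _ = (I ×ˢ I).card * (C * (a : ℝ) ^ ε) := by rw [Finset.sum_const, nsmul_eq_mul]
    _ ≤ (9 * a : ℕ) * (C * (a : ℝ) ^ ε) := by
      gcongr
      exact card_Icc_sqrt_product_le ha
    _ = 9 * C * a * (a : ℝ) ^ ε := by
      push_cast
      ring

end SphereBounds

section PureQuaternions

/-- The quaternion with real part `0` and imaginary part `v`; products of such quaternions encode
dot and cross products. -/
def pureQuaternion (v : Fin 3 → ℤ) : ℍ[ℤ] := quaternionOfCoords 0 (v 0) (v 1) (v 2)

theorem pureQuaternion_injective : Function.Injective pureQuaternion := by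
  intro u v h
  obtain ⟨-, hI, hJ, hK⟩ := Quaternion.ext_iff.mp h
  funext i
  fin_cases i
  exacts [hI, hJ, hK]

theorem star_pureQuaternion (v : Fin 3 → ℤ) : star (pureQuaternion v) = -pureQuaternion v := by
  ext <;> simp [pureQuaternion]

theorem re_pureQuaternion_mul (u v : Fin 3 → ℤ) :
    (pureQuaternion u * pureQuaternion v).re = -(u ⬝ᵥ v) := by
  simp [pureQuaternion, vec3_dotProduct]
  ring

theorem normSq_pureQuaternion (v : Fin 3 → ℤ) : normSq (pureQuaternion v) = v ⬝ᵥ v := by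
  simp [pureQuaternion, normSq_def', vec3_dotProduct]
  ring

theorem normSq_pureQuaternion_commutator (u v : Fin 3 → ℤ) :
    normSq (pureQuaternion u * pureQuaternion v - pureQuaternion v * pureQuaternion u) =
      4 * ((u ⬝ᵥ u) * (v ⬝ᵥ v) - (u ⬝ᵥ v) ^ 2) := by
  rw [normSq_commutator (star_pureQuaternion u) (star_pureQuaternion v), normSq_pureQuaternion,
    normSq_pureQuaternion, re_pureQuaternion_mul, neg_sq]

theorem exists_isPrimitiveQuaternion_mul_pureQuaternion_eq {u v u' v' : Fin 3 → ℤ}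
    (huv : u ⬝ᵥ u * v ⬝ᵥ v - (u ⬝ᵥ v) ^ 2 ≠ 0) (h₁₁ : u' ⬝ᵥ u' = u ⬝ᵥ u)
    (h₁₂ : u' ⬝ᵥ v' = u ⬝ᵥ v) (h₂₂ : v' ⬝ᵥ v' = v ⬝ᵥ v) :
    ∃ q, IsPrimitiveQuaternion q ∧ q * pureQuaternion u = pureQuaternion u' * q ∧
      q * pureQuaternion v = pureQuaternion v' * q := by
  refine exists_isPrimitiveQuaternion_intertwiner (star_pureQuaternion u) (star_pureQuaternion v)
    (star_pureQuaternion u') (star_pureQuaternion v') ?_ ?_ ?_ fun hcomm => ?_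
  · rw [normSq_pureQuaternion, normSq_pureQuaternion, h₁₁]
  · rw [normSq_pureQuaternion, normSq_pureQuaternion, h₂₂]
  · rw [re_pureQuaternion_mul, re_pureQuaternion_mul, h₁₂]
  · refine mul_ne_zero four_ne_zero huv ?_
    rw [← normSq_pureQuaternion_commutator, hcomm, sub_self, map_zero]

end PureQuaternions

section GramTriples

theorem card_pairs_of_gram_eq_le {n k m : ℤ} {D B : ℕ} (hD : n * m - k ^ 2 = D) (hD0 : D ≠ 0)
    (hB : ∀ a ≠ 0, a ≤ 16 * Int.gcd n m → (normSqSphere a).card ≤ B)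
    {P : Finset ((Fin 3 → ℤ) × (Fin 3 → ℤ))}
    (hP : ∀ p ∈ P, p.1 ⬝ᵥ p.1 = n ∧ p.1 ⬝ᵥ p.2 = k ∧ p.2 ⬝ᵥ p.2 = m) :
    P.card ≤ B * (16 * D).divisors.card ^ 3 := by
  classical
  rcases P.eq_empty_or_nonempty with rfl | ⟨⟨u, v⟩, hp₀⟩
  · exact Nat.zero_le _
  obtain ⟨rfl, rfl, rfl⟩ := hP _ hp₀
  dsimp only at hD hB hP
  have hE : 4 * normSq (pureQuaternion u * pureQuaternion v - pureQuaternion v * pureQuaternion u) =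
      (16 * D : ℕ) := by
    rw [normSq_pureQuaternion_commutator, hD]
    push_cast
    ring
  have huv : u ⬝ᵥ u * v ⬝ᵥ v - (u ⬝ᵥ v) ^ 2 ≠ 0 := hD ▸ Int.natCast_ne_zero.mpr hD0
  have hq := fun p hp => exists_isPrimitiveQuaternion_mul_pureQuaternion_eq huv
    (hP p hp).1 (hP p hp).2.1 (hP p hp).2.2
  choose! q hprim hqu hqv using hq
  have hq_inj : Set.InjOn q P := by
    intro p hp p' hp' h
    have hq0 := (hprim p hp).ne_zero
    refine Prod.ext (pureQuaternion_injective (mul_right_cancel₀ hq0 ?_))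
      (pureQuaternion_injective (mul_right_cancel₀ hq0 ?_))
    · rw [← hqu p hp, h, hqu p' hp']
    · rw [← hqv p hp, h, hqv p' hp']
  rw [← Finset.card_image_of_injOn hq_inj]
  refine card_primitive_intertwiners_le (star_pureQuaternion u) (star_pureQuaternion v) hE
    (mul_ne_zero (by norm_num) hD0)
    (by rwa [normSq_pureQuaternion, normSq_pureQuaternion]) ?_ ?_ ?_ <;>
    rw [Finset.forall_mem_image]
  · exact hprim
  · exact fun p hp => ⟨_, hqu p hp⟩
  · exact fun p hp => ⟨_, hqv p hp⟩

theorem dotProduct_cross_sq {R : Type*} [CommRing R] (a u v : Fin 3 → R) : (a ⬝ᵥ u ⨯₃ v) ^ 2 =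
    a ⬝ᵥ a * (u ⬝ᵥ u * v ⬝ᵥ v - (u ⬝ᵥ v) ^ 2) - v ⬝ᵥ v * (u ⬝ᵥ a) ^ 2 +
      2 * u ⬝ᵥ v * u ⬝ᵥ a * v ⬝ᵥ a - u ⬝ᵥ u * (v ⬝ᵥ a) ^ 2 := by
  simp only [vec3_dotProduct, cross_apply, cons_val]
  ring

theorem eq_of_dotProduct_eq {R : Type*} [CommRing R] [IsDomain R] {u v a b : Fin 3 → R}
    (huv : u ⬝ᵥ u * v ⬝ᵥ v - (u ⬝ᵥ v) ^ 2 ≠ 0) (hu : u ⬝ᵥ a = u ⬝ᵥ b) (hv : v ⬝ᵥ a = v ⬝ᵥ b)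
    (hc : a ⬝ᵥ u ⨯₃ v = b ⬝ᵥ u ⨯₃ v) : a = b := by
  have hdet : Matrix.det ![u ⨯₃ v, u, v] ≠ 0 := by
    rwa [← triple_product_eq_det, cross_dot_cross, dotProduct_comm v u, ← sq]
  rw [← sub_eq_zero]
  refine Matrix.eq_zero_of_mulVec_eq_zero hdet ?_
  funext i
  fin_cases i <;> simp [mulVec, dotProduct_sub, dotProduct_comm (u ⨯₃ v), hu, hv, hc]

theorem card_le_two_of_dotProduct_eq {R : Type*} [CommRing R] [IsDomain R] {u v : Fin 3 → R}
    {α β γ : R} (huv : u ⬝ᵥ u * v ⬝ᵥ v - (u ⬝ᵥ v) ^ 2 ≠ 0) {S : Finset (Fin 3 → R)}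
    (hS : ∀ a ∈ S, u ⬝ᵥ a = α ∧ v ⬝ᵥ a = β ∧ a ⬝ᵥ a = γ) : S.card ≤ 2 := by
  classical
  rcases S.eq_empty_or_nonempty with rfl | ⟨b, hb⟩
  · exact Nat.zero_le 2
  obtain ⟨hub, hvb, hbb⟩ := hS b hb
  refine (Finset.card_le_card_of_injOn (t := {b ⬝ᵥ u ⨯₃ v, -(b ⬝ᵥ u ⨯₃ v)})
    (fun a => a ⬝ᵥ u ⨯₃ v) (fun a ha => ?_) fun a ha a' ha' h => ?_).trans Finset.card_le_two
  · obtain ⟨hua, hva, haa⟩ := hS a ha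
    suffices h : (a ⬝ᵥ u ⨯₃ v) ^ 2 = (b ⬝ᵥ u ⨯₃ v) ^ 2 by
      simpa using sq_eq_sq_iff_eq_or_eq_neg.mp h
    rw [dotProduct_cross_sq, dotProduct_cross_sq, hua, hva, haa, hub, hvb, hbb]
  · obtain ⟨hua, hva, -⟩ := hS a ha
    obtain ⟨hua', hva', -⟩ := hS a' ha'
    exact eq_of_dotProduct_eq huv (hua.trans hua'.symm) (hva.trans hva'.symm) h

theorem card_triples_of_gram_eq_le {Λ : Matrix (Fin 3) (Fin 3) ℤ} {D B : ℕ}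
    (hD : Λ 0 0 * Λ 1 1 - Λ 0 1 ^ 2 = D) (hD0 : D ≠ 0)
    (hB : ∀ a ≠ 0, a ≤ 16 * Int.gcd (Λ 0 0) (Λ 1 1) → (normSqSphere a).card ≤ B)
    {T : Finset (Fin 3 → Fin 3 → ℤ)} (hT : ∀ t ∈ T, ∀ i j, t i ⬝ᵥ t j = Λ i j) :
    T.card ≤ 2 * (B * (16 * D).divisors.card ^ 3) := by
  classical
  let P := T.image fun t => (t 0, t 1)
  have hP : ∀ p ∈ P, p.1 ⬝ᵥ p.1 = Λ 0 0 ∧ p.1 ⬝ᵥ p.2 = Λ 0 1 ∧ p.2 ⬝ᵥ p.2 = Λ 1 1 :=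
    Finset.forall_mem_image.mpr fun t ht => ⟨hT t ht 0 0, hT t ht 0 1, hT t ht 1 1⟩
  refine (Finset.card_le_mul_card_image_of_maps_to (fun t ht => Finset.mem_image_of_mem _ ht) 2
    fun p hp => ?_).trans (Nat.mul_le_mul_left 2 (card_pairs_of_gram_eq_le hD hD0 hB hP))
  obtain ⟨h₀₀, h₀₁, h₁₁⟩ := hP p hp
  have hF {t} (ht : t ∈ T.filter fun t => (t 0, t 1) = p) : t ∈ T ∧ t 0 = p.1 ∧ t 1 = p.2 := by
    simpa [Prod.ext_iff] using ht
  have hinj : Set.InjOn (fun t : Fin 3 → Fin 3 → ℤ => t 2) (T.filter fun t => (t 0, t 1) = p) := by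
    intro t ht t' ht' h
    obtain ⟨-, h0, h1⟩ := hF ht
    obtain ⟨-, h0', h1'⟩ := hF ht'
    funext i
    fin_cases i
    exacts [h0.trans h0'.symm, h1.trans h1'.symm, h]
  rw [← Finset.card_image_of_injOn hinj]
  refine card_le_two_of_dotProduct_eq (u := p.1) (v := p.2) (α := Λ 0 2) (β := Λ 1 2) (γ := Λ 2 2)
    (by rw [h₀₀, h₀₁, h₁₁, hD]; exact_mod_cast hD0) (Finset.forall_mem_image.mpr fun t ht => ?_)
  obtain ⟨ht, h0, h1⟩ := hF ht
  rw [← h0, ← h1]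
  exact ⟨hT t ht 0 2, hT t ht 1 2, hT t ht 2 2⟩

end GramTriples

section Counting

theorem natCard_subtype_le_of_forall_finset_card_le {α : Type*} {p : α → Prop} {n : ℕ}
    (h : ∀ s : Finset α, (∀ a ∈ s, p a) → s.card ≤ n) : Nat.card {a // p a} ≤ n := by
  rw [Nat.card, ← Cardinal.toNat_natCast n]
  refine Cardinal.toNat_le_toNat ?_ Cardinal.natCast_lt_aleph0
  exact Cardinal.mk_le_iff_forall_finset_subset_card_le.mpr h

theorem rpow_le_mul_rpow_of_le_mul {ε : ℝ} (hε : 0 ≤ ε) {a c P : ℕ} (ha : a ≤ c * P) :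
    (a : ℝ) ^ ε ≤ (c : ℝ) ^ ε * (P : ℝ) ^ ε := by
  rw [← Real.mul_rpow c.cast_nonneg P.cast_nonneg]
  gcongr
  exact_mod_cast ha

theorem exists_forall_card_normSqSphere_le_rpow {ε : ℝ} (hε : 0 < ε) {c : ℕ} (hc : 0 < c) :
    ∃ C : ℝ, 0 < C ∧ ∀ g P : ℕ, g ≤ P → ∀ a ≠ 0, a ≤ c * g →
      ((normSqSphere a).card : ℝ) ≤ C * g * (P : ℝ) ^ ε := by
  obtain ⟨C, hC1, hC⟩ := exists_card_normSqSphere_le_rpow hε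
  refine ⟨C * c * (c : ℝ) ^ ε, by positivity, fun g P hgP a ha hag => ?_⟩
  calc ((normSqSphere a).card : ℝ) ≤ C * a * (a : ℝ) ^ ε := hC a ha
    _ ≤ C * (c * g) * ((c : ℝ) ^ ε * (P : ℝ) ^ ε) := by
      gcongr
      · exact_mod_cast hag
      · exact rpow_le_mul_rpow_of_le_mul hε.le (hag.trans (Nat.mul_le_mul_left c hgP))
    _ = C * c * (c : ℝ) ^ ε * g * (P : ℝ) ^ ε := by ring

theorem exists_forall_card_divisors_mul_le_rpow {ε : ℝ} (hε : 0 < ε) {c : ℕ} (hc : 0 < c) :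
    ∃ C : ℝ, 0 < C ∧ ∀ D P : ℕ, D ≠ 0 → D ≤ P →
      ((c * D).divisors.card : ℝ) ≤ C * (P : ℝ) ^ ε := by
  obtain ⟨C, hC1, hC⟩ := exists_card_divisors_le_rpow hε
  refine ⟨C * (c : ℝ) ^ ε, by positivity, fun D P hD hDP => ?_⟩
  rw [mul_assoc]
  refine (hC _ (mul_ne_zero hc.ne' hD)).trans ?_
  gcongr
  exact rpow_le_mul_rpow_of_le_mul hε.le (Nat.mul_le_mul_left c hDP)

theorem exists_natCard_triples_le_rpow {ε : ℝ} (hε : 0 < ε) :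
    ∃ C : ℝ, 0 < C ∧ ∀ Λ : Matrix (Fin 3) (Fin 3) ℤ, Λ 0 1 ^ 2 < Λ 0 0 * Λ 1 1 →
      (Nat.card {t : Fin 3 → (Fin 3 → ℤ) // ∀ i j, t i ⬝ᵥ t j = Λ i j} : ℝ) ≤
        C * ((Λ 0 0 * Λ 1 1 : ℤ) : ℝ) ^ ε * (Int.gcd (Λ 0 0) (Λ 1 1) : ℝ) := by
  obtain ⟨C₁, hC₁, hdivisors⟩ := exists_forall_card_divisors_mul_le_rpow
    (show 0 < ε / 4 by positivity) (show 0 < 16 by norm_num)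
  obtain ⟨C₂, hC₂, hsphere⟩ := exists_forall_card_normSqSphere_le_rpow
    (show 0 < ε / 4 by positivity) (show 0 < 16 by norm_num)
  refine ⟨2 * C₂ * C₁ ^ 3, by positivity, fun Λ hΛ => ?_⟩
  set g := Int.gcd (Λ 0 0) (Λ 1 1)
  obtain ⟨P, hP⟩ := Int.eq_ofNat_of_zero_le ((sq_nonneg _).trans hΛ.le)
  obtain ⟨D, hD⟩ := Int.eq_ofNat_of_zero_le (sub_nonneg.mpr hΛ.le)
  have hD0 : D ≠ 0 := Int.natCast_ne_zero.mp (hD ▸ (sub_pos.mpr hΛ).ne')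
  have hDP : D ≤ P := by
    zify
    rw [← hD, ← hP]
    exact sub_le_self _ (sq_nonneg _)
  have hgP : g ≤ P := by
    refine Nat.le_of_dvd ((Nat.pos_of_ne_zero hD0).trans_le hDP) (Int.natCast_dvd_natCast.mp ?_)
    exact hP ▸ (Int.gcd_dvd_left _ _).mul_right _
  let X : ℝ := (P : ℝ) ^ (ε / 4)
  let B := ⌊C₂ * g * X⌋₊
  have hB : ∀ a ≠ 0, a ≤ 16 * g → (normSqSphere a).card ≤ B := fun a ha hag =>
    Nat.le_floor (hsphere g P hgP a ha hag)
  have hX : X ^ 4 = (P : ℝ) ^ ε := by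
    rw [← Real.rpow_mul_natCast P.cast_nonneg]
    norm_num
  calc (Nat.card {t : Fin 3 → (Fin 3 → ℤ) // ∀ i j, t i ⬝ᵥ t j = Λ i j} : ℝ)
      ≤ 2 * (B * (16 * D).divisors.card ^ 3) := by
        exact_mod_cast natCard_subtype_le_of_forall_finset_card_le fun T hT =>
          card_triples_of_gram_eq_le hD hD0 hB hT
    _ ≤ 2 * (C₂ * g * X * (C₁ * X) ^ 3) := by
      gcongr
      · exact Nat.floor_le (by positivity)
      · exact hdivisors D P hD0 hDP
    _ = 2 * C₂ * C₁ ^ 3 * X ^ 4 * g := by ring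
    _ = 2 * C₂ * C₁ ^ 3 * ((Λ 0 0 * Λ 1 1 : ℤ) : ℝ) ^ ε * g := by
      rw [hX, hP, Int.cast_natCast]

theorem sq_dotProduct_lt_of_linearIndependent {v : Fin 2 → Fin 3 → ℤ}
    (hv : LinearIndependent ℚ fun i j => (v i j : ℚ)) :
    (v 0 ⬝ᵥ v 1) ^ 2 < v 0 ⬝ᵥ v 0 * v 1 ⬝ᵥ v 1 := by
  have hcross : v 0 ⨯₃ v 1 ≠ 0 := by
    intro h
    have hv' : LinearIndependent ℚ ![fun j => (v 0 j : ℚ), fun j => (v 1 j : ℚ)] := by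
      convert hv with i
      fin_cases i <;> rfl
    refine crossProduct_ne_zero_iff_linearIndependent.mpr hv' ?_
    funext i
    have hi := congrFun h i
    rw [cross_apply] at hi ⊢
    fin_cases i <;> dsimp at hi ⊢ <;> exact_mod_cast hi
  have hpos : 0 < v 0 ⨯₃ v 1 ⬝ᵥ v 0 ⨯₃ v 1 :=
    (Finset.sum_nonneg fun i _ => mul_self_nonneg _).lt_of_ne'
      (dotProduct_self_eq_zero.not.mpr hcross)
  rw [cross_dot_cross, dotProduct_comm (v 1) (v 0), ← sq] at hpos
  exact sub_pos.mp hpos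

theorem dotProduct_self_le_of_abs_le {v : Fin 3 → ℤ} {q : ℤ} (hv : ∀ i, |v i| ≤ q) :
    v ⬝ᵥ v ≤ 3 * q ^ 2 := by
  have h (i) : v i * v i ≤ q ^ 2 := by
    rw [← sq]
    exact sq_le_sq' (abs_le.mp (hv i)).1 (abs_le.mp (hv i)).2
  rw [vec3_dotProduct]
  linarith [h 0, h 1, h 2]

theorem congruence_class_size_general {ε : ℝ} (hε : 0 < ε) :
    ∃ C : ℝ, 0 < C ∧ ∀ (q : ℕ) (v : Fin 2 → Fin 3 → ℤ),
      LinearIndependent ℚ (fun i j => (v i j : ℚ)) → (∀ i j, |v i j| ≤ q) →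
      ∀ Λ : Matrix (Fin 3) (Fin 3) ℤ, (∀ i j : Fin 2, Λ i.castSucc j.castSucc = v i ⬝ᵥ v j) →
      (Nat.card {t : Fin 3 → (Fin 3 → ℤ) // ∀ i j, t i ⬝ᵥ t j = Λ i j} : ℝ) ≤
        C * (q : ℝ) ^ ε * (Int.gcd (Λ 0 0) (Λ 1 1) : ℝ) := by
  obtain ⟨C, hC, hcard⟩ := exists_natCard_triples_le_rpow (show 0 < ε / 4 by positivity)
  refine ⟨C * 9 ^ (ε / 4), by positivity, fun q v hv hq Λ hΛ => ?_⟩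
  have h₀₀ : Λ 0 0 = v 0 ⬝ᵥ v 0 := hΛ 0 0
  have h₁₁ : Λ 1 1 = v 1 ⬝ᵥ v 1 := hΛ 1 1
  have hminor : Λ 0 1 ^ 2 < Λ 0 0 * Λ 1 1 := by
    rw [h₀₀, h₁₁, show Λ 0 1 = v 0 ⬝ᵥ v 1 from hΛ 0 1]
    exact sq_dotProduct_lt_of_linearIndependent hv
  have hprod : Λ 0 0 * Λ 1 1 ≤ 9 * (q : ℤ) ^ 4 :=
    calc Λ 0 0 * Λ 1 1 ≤ (3 * (q : ℤ) ^ 2) * (3 * (q : ℤ) ^ 2) := by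
          rw [h₀₀, h₁₁]
          exact mul_le_mul (dotProduct_self_le_of_abs_le (hq 0))
            (dotProduct_self_le_of_abs_le (hq 1))
            (Finset.sum_nonneg fun i _ => mul_self_nonneg _) (by positivity)
      _ = 9 * (q : ℤ) ^ 4 := by ring
  refine (hcard Λ hminor).trans ?_
  refine mul_le_mul_of_nonneg_right ?_ (Nat.cast_nonneg _)
  calc C * ((Λ 0 0 * Λ 1 1 : ℤ) : ℝ) ^ (ε / 4) ≤ C * (9 * (q : ℝ) ^ 4) ^ (ε / 4) := by
        gcongr
        · exact_mod_cast (sq_nonneg _).trans hminor.le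
        · exact_mod_cast hprod
    _ = C * 9 ^ (ε / 4) * (q : ℝ) ^ ε := by
      rw [Real.mul_rpow (by norm_num) (by positivity), ← mul_assoc, ← Real.rpow_natCast_mul
        q.cast_nonneg]
      norm_num [mul_div_cancel₀]

end Counting

/-- For every `ε > 0` there is `C > 0` such that for every integer `q > 1`: if
`x, y, z ∈ ℤ³` are linearly independent (as vectors of `ℚ³`) with all coordinates in
`[0,q]`, and `Λ` is the Gram matrix of `(x,y,z)`, then the number of triples
`(x',y',z') ∈ (ℤ³)³` with Gram matrix `Λ` is at most `C · q^ε · gcd(Λ₁₁, Λ₂₂)`. -/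
theorem congruence_class_size :
    ∀ ε : ℝ, 0 < ε → ∃ C : ℝ, 0 < C ∧ ∀ q : ℕ, 1 < q →
      ∀ v : Fin 3 → (Fin 3 → ℤ),
        LinearIndependent ℚ (fun i => fun j => ((v i j : ℚ))) →
        (∀ i j, 0 ≤ v i j ∧ v i j ≤ q) →
        ∀ Λ : Matrix (Fin 3) (Fin 3) ℤ, (∀ i j, Λ i j = v i ⬝ᵥ v j) →
        (Nat.card {t : Fin 3 → (Fin 3 → ℤ) // ∀ i j, t i ⬝ᵥ t j = Λ i j} : ℝ) ≤
          C * (q : ℝ) ^ ε * (Int.gcd (Λ 0 0) (Λ 1 1) : ℝ) := fun _ hε =>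
  (congruence_class_size_general hε).imp fun _ ⟨hC, h⟩ => ⟨hC, fun q _ v hv hq Λ hΛ =>
    h q (v ∘ Fin.castSucc) (hv.comp _ (Fin.castSucc_injective 2))
      (fun i j => abs_of_nonneg (hq i.castSucc j).1 ▸ (hq i.castSucc j).2) Λ
      fun i j => hΛ i.castSucc j.castSucc⟩
end

section
/- For every ε > 0 there exists a constant C > 0 such that for every integer q > 1, every nonzero x ∈ ℤ³, and all integers a, b with 0 ≤ a, b ≤ 4q², the number of points z ∈ ℤ³ satisfying ⟨z,z⟩ = a and ⟨z−x, z−x⟩ = b is at most C · q^{ε}. -/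
open Matrix

/-!
If the circle carries at least three integer points `p`, `q`, `r`, then `(q - p) ⨯₃ (r - p)` is a
nonzero normal `n` of its plane whose length is polynomially bounded in `a`, however large `x` is.
Coordinates along the orthogonal vectors `n ⨯₃ e` and `e = q - p` of that plane embed the integer
points of the circle into the elements of `ℤ√(-⟨n, n⟩)` of one fixed norm `N ≪ a ^ 4`.

In `ℤ√d` with `d < 0`, the elements of norm `N ≠ 0` number `≪ d(N) ^ 2`, uniformly in `d`: one
reduces to `d` squarefree and to elements with coprime coordinates. Fixing one such `w`, the divisor
`gcd (N, im (z * conj w))` of `N` almost determines `z`, as the ideal factorization of `z` would: if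
it is the same for `y` and `z` then `4 * y / z` is one of the boundedly many elements of norm `16`.
The divisor bound `d(N) ≪ N ^ ε` concludes.
-/

section DivisorBound

theorem add_one_le_mul_pow {x : ℝ} (hx : 1 < x) (k : ℕ) :
    (k + 1 : ℝ) ≤ (1 + 1 / (x - 1)) * x ^ k := by
  have hx' : 0 < x - 1 := sub_pos.2 hx
  have bernoulli : 1 + k * (x - 1) ≤ x ^ k := one_add_mul_sub_le_pow (by linarith) k
  calc (k + 1 : ℝ) ≤ k + 1 + (k * (x - 1) + 1 / (x - 1)) := le_add_of_nonneg_right (by positivity)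
    _ = (1 + 1 / (x - 1)) * (1 + k * (x - 1)) := by field
    _ ≤ (1 + 1 / (x - 1)) * x ^ k := by gcongr

theorem natCast_rpow_eq_prod_primeFactors {n : ℕ} (hn : n ≠ 0) (ε : ℝ) :
    (n : ℝ) ^ ε = ∏ p ∈ n.primeFactors, ((p : ℝ) ^ ε) ^ n.factorization p := by
  conv_lhs => rw [← Nat.prod_factorization_pow_eq_self hn]
  rw [Nat.prod_factorization_eq_prod_primeFactors, Nat.cast_prod,
    ← Real.finsetProd_rpow _ _ fun _ _ => by positivity]
  refine Finset.prod_congr rfl fun p _ => ?_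
  rw [Nat.cast_pow, Real.rpow_pow_comm p.cast_nonneg]

theorem exists_card_divisors_le_mul_rpow {ε : ℝ} (hε : 0 < ε) :
    ∃ C : ℝ, 0 < C ∧ ∀ n : ℕ, n ≠ 0 → (n.divisors.card : ℝ) ≤ C * (n : ℝ) ^ ε := by
  obtain ⟨P, hP⟩ := exists_nat_ge ((2 : ℝ) ^ ε⁻¹)
  have h2ε : 1 < (2 : ℝ) ^ ε := Real.one_lt_rpow one_lt_two hε
  obtain ⟨K, hK⟩ : ∃ K, K = 1 + 1 / ((2 : ℝ) ^ ε - 1) := ⟨_, rfl⟩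
  have one_le_K : 1 ≤ K := hK ▸ le_add_of_nonneg_right (one_div_pos.2 (sub_pos.2 h2ε)).le
  refine ⟨K ^ P, by positivity, fun n hn => ?_⟩
  -- Primes `p ≥ P` satisfy `p ^ ε ≥ 2` and cost nothing; each of the at most `P` others costs `K`.
  have local_bound (p : ℕ) (hp : p ∈ n.primeFactors) : ((n.factorization p + 1 : ℕ) : ℝ) ≤
      (if p < P then K else 1) * ((p : ℝ) ^ ε) ^ n.factorization p := by
    have two_le_p : (2 : ℝ) ≤ p := mod_cast (Nat.prime_of_mem_primeFactors hp).two_le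
    split_ifs with hpP
    · calc ((n.factorization p + 1 : ℕ) : ℝ) ≤ K * ((2 : ℝ) ^ ε) ^ n.factorization p := by
            rw [hK]; exact_mod_cast add_one_le_mul_pow h2ε _
        _ ≤ K * ((p : ℝ) ^ ε) ^ n.factorization p := by gcongr
    · have two_le_rpow : (2 : ℝ) ≤ (p : ℝ) ^ ε :=
        (Real.rpow_inv_le_iff_of_pos two_pos.le p.cast_nonneg hε).1
          (hP.trans (mod_cast not_lt.1 hpP))
      calc ((n.factorization p + 1 : ℕ) : ℝ) ≤ (2 : ℝ) ^ n.factorization p :=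
            mod_cast Nat.lt_two_pow_self
        _ ≤ 1 * ((p : ℝ) ^ ε) ^ n.factorization p := by rw [one_mul]; gcongr
  have card_small_primes : (n.primeFactors.filter (· < P)).card ≤ P := by
    simpa using Finset.card_le_card (t := Finset.range P)
      fun p hp => Finset.mem_range.2 (Finset.mem_filter.1 hp).2
  calc (n.divisors.card : ℝ)
      = ∏ p ∈ n.primeFactors, ((n.factorization p + 1 : ℕ) : ℝ) := by
        rw [Nat.card_divisors hn, Nat.cast_prod]
    _ ≤ ∏ p ∈ n.primeFactors, (if p < P then K else 1) * ((p : ℝ) ^ ε) ^ n.factorization p :=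
        Finset.prod_le_prod (fun _ _ => by positivity) local_bound
    _ = K ^ (n.primeFactors.filter (· < P)).card * (n : ℝ) ^ ε := by
        rw [Finset.prod_mul_distrib, ← natCast_rpow_eq_prod_primeFactors hn, Finset.prod_ite,
          Finset.prod_const, Finset.prod_const_one, mul_one]
    _ ≤ K ^ P * (n : ℝ) ^ ε := by gcongr

end DivisorBound

section Zsqrtd

variable {d : ℤ} {w y z : ℤ√d}

theorem isCoprime_im_norm (hw : IsCoprime w.re w.im) : IsCoprime w.im w.norm := by
  have : IsCoprime w.im (w.re * w.re + w.im * -(d * w.im)) :=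
    (hw.symm.mul_right hw.symm).add_mul_left_right _
  convert this using 1
  rw [Zsqrtd.norm_def]
  ring

theorem norm_dvd_im_mul_star_mul_im_mul (h : z.norm = w.norm) :
    w.norm ∣ (z * star w).im * (z * w).im := by
  refine ⟨z.im ^ 2 - w.im ^ 2, ?_⟩
  rw [Zsqrtd.norm_def] at h
  simp only [Zsqrtd.norm_def, Zsqrtd.im_mul, Zsqrtd.re_star, Zsqrtd.im_star] at h ⊢
  linear_combination -w.im ^ 2 * h

theorem dvd_four_of_dvd_im_mul (hd : Squarefree d) (hz : IsCoprime z.re z.im)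
    (hw : IsCoprime w.re w.im) (h : z.norm = w.norm) {m : ℤ} (hm : m * m ∣ w.norm)
    (hstar : m ∣ (z * star w).im) (hmul : m ∣ (z * w).im) : m ∣ 4 := by
  have coprime_w : IsCoprime m w.im :=
    ((isCoprime_im_norm hw).of_isCoprime_of_dvd_right (dvd_of_mul_right_dvd hm)).symm
  have coprime_z : IsCoprime m z.im :=
    ((isCoprime_im_norm hz).of_isCoprime_of_dvd_right (h ▸ dvd_of_mul_right_dvd hm)).symm
  have dvd_re : m ∣ 2 * z.re := by
    refine coprime_w.dvd_of_dvd_mul_right ?_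
    convert dvd_sub hmul hstar using 1
    simp only [Zsqrtd.im_mul, Zsqrtd.re_star, Zsqrtd.im_star]
    ring
  have dvd_im : m * m ∣ d * 4 * (z.im * z.im) := by
    have eq : d * 4 * (z.im * z.im) = 2 * z.re * (2 * z.re) - 4 * z.norm := by
      rw [Zsqrtd.norm_def]; ring
    exact eq ▸ dvd_sub (mul_dvd_mul dvd_re dvd_re) ((h ▸ hm).mul_left 4)
  have coprime_sq : IsCoprime (m * m) (z.im * z.im) :=
    (coprime_z.mul_left coprime_z).mul_right (coprime_z.mul_left coprime_z)
  exact hd.dvd_of_squarefree_of_mul_dvd_mul_right (coprime_sq.dvd_of_dvd_mul_right dvd_im)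

theorem dvd_im_mul_star_of_dvd_im_mul_star {m : ℤ} (hm : IsCoprime m w.im)
    (hy : m ∣ (y * star w).im) (hz : m ∣ (z * star w).im) : m ∣ (y * star z).im := by
  have eq : (y * star z).im * w.im = z.im * (y * star w).im - y.im * (z * star w).im := by
    simp only [Zsqrtd.im_mul, Zsqrtd.re_star, Zsqrtd.im_star]
    ring
  exact hm.dvd_of_dvd_mul_right (eq ▸ dvd_sub (hy.mul_left z.im) (hz.mul_left y.im))

theorem norm_dvd_four_mul_im_mul_star (hd : Squarefree d) (hw0 : w.norm ≠ 0)
    (hz : IsCoprime z.re z.im) (hw : IsCoprime w.re w.im)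
    (hyw : y.norm = w.norm) (hzw : z.norm = w.norm)
    (hgcd : Int.gcd w.norm (y * star w).im = Int.gcd w.norm (z * star w).im) :
    w.norm ∣ 4 * (y * star z).im := by
  -- The norm is `g * m`, where `g` divides the products with `star w` and `m` those with `w`.
  obtain ⟨g, hg⟩ : ∃ g : ℤ, g = Int.gcd w.norm (z * star w).im := ⟨_, rfl⟩
  obtain ⟨m, hm⟩ : g ∣ w.norm := hg ▸ Int.gcd_dvd_left ..
  have g_dvd_y : g ∣ (y * star w).im := hg ▸ hgcd ▸ Int.gcd_dvd_right ..
  have g_dvd_z : g ∣ (z * star w).im := hg ▸ Int.gcd_dvd_right ..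
  have m_dvd {u : ℤ√d} (hu : u.norm = w.norm) (hgu : g = Int.gcd w.norm (u * star w).im) :
      m ∣ (u * w).im := by
    refine Int.dvd_of_mul_dvd_mul_left (left_ne_zero_of_mul (hm ▸ hw0) : g ≠ 0) ?_
    rw [← hm, hgu, Int.dvd_gcd_mul_iff_dvd_mul]
    exact norm_dvd_im_mul_star_mul_im_mul hu
  have m_dvd_y : m ∣ (y * w).im := m_dvd hyw (hgcd ▸ hg)
  have m_dvd_z : m ∣ (z * w).im := m_dvd hzw hg
  have coprime_g : IsCoprime g w.im :=
    ((isCoprime_im_norm hw).of_isCoprime_of_dvd_right (hm ▸ dvd_mul_right g m)).symm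
  have coprime_m : IsCoprime m w.im :=
    ((isCoprime_im_norm hw).of_isCoprime_of_dvd_right (hm ▸ dvd_mul_left m g)).symm
  have g_dvd : g ∣ (y * star z).im := dvd_im_mul_star_of_dvd_im_mul_star coprime_g g_dvd_y g_dvd_z
  have m_dvd : m ∣ (y * star z).im :=
    dvd_im_mul_star_of_dvd_im_mul_star (w := star w) coprime_m.neg_right
      (by rwa [star_star]) (by rwa [star_star])
  have gcd_dvd_four : gcd g m ∣ 4 :=
    dvd_four_of_dvd_im_mul hd hz hw hzw (hm ▸ mul_dvd_mul (gcd_dvd_left g m) (gcd_dvd_right g m))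
      ((gcd_dvd_left g m).trans g_dvd_z) ((gcd_dvd_right g m).trans m_dvd_z)
  calc w.norm ∣ gcd g m * lcm g m := hm ▸ (gcd_mul_lcm g m).symm.dvd
    _ ∣ 4 * (y * star z).im := mul_dvd_mul gcd_dvd_four (lcm_dvd g_dvd m_dvd)

theorem exists_norm_eq_sq_and_mul_eq (hw0 : w.norm ≠ 0) (h : z.norm = w.norm) {k : ℤ}
    (hdvd : w.norm ∣ k * (z * star w).im) : ∃ s : ℤ√d, s.norm = k ^ 2 ∧ k * z = s * w := by
  have dvd_re : w.norm ∣ k * (z * star w).re := by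
    rw [← Int.pow_dvd_pow_iff two_ne_zero]
    have norm_mul_star : (z * star w).norm = w.norm ^ 2 := by
      rw [Zsqrtd.norm_mul, Zsqrtd.norm_conj, h, sq]
    have : (k * (z * star w).re) ^ 2 = w.norm ^ 2 * k ^ 2 + (k * (z * star w).im) ^ 2 * d := by
      rw [← norm_mul_star, Zsqrtd.norm_def]
      ring
    rw [this]
    exact dvd_add (dvd_mul_right ..) ((pow_dvd_pow_of_dvd hdvd 2).mul_right d)
  obtain ⟨s, hs⟩ : (w.norm : ℤ√d) ∣ k * (z * star w) :=
    (Zsqrtd.intCast_dvd ..).2 (by rw [Zsqrtd.re_smul, Zsqrtd.im_smul]; exact ⟨dvd_re, hdvd⟩)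
  have hsw : k * z = s * w := by
    refine Zsqrtd.eq_of_smul_eq_smul_left hw0 ?_
    calc (w.norm : ℤ√d) * (k * z) = k * (z * star w) * w := by
          rw [Zsqrtd.norm_eq_mul_conj]; ring
      _ = w.norm * (s * w) := by rw [hs, mul_assoc]
  refine ⟨s, mul_right_cancel₀ hw0 ?_, hsw⟩
  rw [← Zsqrtd.norm_mul, ← hsw, Zsqrtd.norm_mul, Zsqrtd.norm_intCast, h, sq]

theorem card_le_of_norm_eq_sq (hd : d < 0) (k : ℕ) (S : Finset (ℤ√d))
    (hS : ∀ s ∈ S, s.norm = k ^ 2) : S.card ≤ (2 * k + 1) ^ 2 := by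
  have card_box : (Finset.Icc (-k : ℤ) k ×ˢ Finset.Icc (-k : ℤ) k).card = (2 * k + 1) ^ 2 := by
    rw [Finset.card_product, Int.card_Icc, sq, show (k + 1 - -k : ℤ).toNat = 2 * k + 1 by omega]
  rw [← card_box]
  refine Finset.card_le_card_of_injOn (fun s => (s.re, s.im)) (fun s hs => ?_)
    fun s _ t _ hst => Zsqrtd.ext (congrArg Prod.fst hst) (congrArg Prod.snd hst)
  have hnorm : s.re * s.re - d * s.im * s.im = k ^ 2 := hS s hs
  have im_le : s.im ^ 2 ≤ (k : ℤ) ^ 2 := by nlinarith [sq_nonneg s.re, sq_nonneg s.im]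
  have re_le : s.re ^ 2 ≤ (k : ℤ) ^ 2 := by nlinarith [sq_nonneg s.im]
  simpa only [Finset.coe_product, Set.mem_prod, Finset.coe_Icc, Set.mem_Icc] using
    ⟨abs_le.1 (abs_le_of_sq_le_sq re_le k.cast_nonneg),
      abs_le.1 (abs_le_of_sq_le_sq im_le k.cast_nonneg)⟩

theorem card_le_of_norm_eq_of_isCoprime (hd : d < 0) (hsq : Squarefree d) {N : ℕ} (hN : N ≠ 0)
    (S : Finset (ℤ√d)) (hS : ∀ z ∈ S, z.norm = N) (hcop : ∀ z ∈ S, IsCoprime z.re z.im) :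
    S.card ≤ 81 * N.divisors.card := by
  classical
  rcases S.eq_empty_or_nonempty with rfl | ⟨w, hw⟩
  · simp
  refine Finset.card_le_mul_card_image_of_maps_to
    (f := fun z => Int.gcd w.norm (z * star w).im) (fun z _ => ?_) 81 fun g _ => ?_
  · rw [hS w hw]
    exact Nat.mem_divisors.2 ⟨Int.gcd_dvd_natAbs_left .., hN⟩
  set F := S.filter fun z => Int.gcd w.norm (z * star w).im = g
  have mem_F {z : ℤ√d} (hz : z ∈ F) : z ∈ S ∧ Int.gcd w.norm (z * star w).im = g :=
    Finset.mem_filter.1 hz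
  rcases F.eq_empty_or_nonempty with hF | ⟨z, hz⟩
  · simp [hF]
  obtain ⟨hzS, hzg⟩ := mem_F hz
  have norm_ne_zero {u : ℤ√d} (hu : u ∈ S) : u.norm ≠ 0 := by
    rw [hS u hu]; exact_mod_cast hN
  have quotient (y : ℤ√d) (hy : y ∈ F) : ∃ s : ℤ√d, s.norm = 4 ^ 2 ∧ (4 : ℤ) * y = s * z := by
    obtain ⟨hyS, hyg⟩ := mem_F hy
    refine exists_norm_eq_sq_and_mul_eq (norm_ne_zero hzS) (by rw [hS y hyS, hS z hzS]) ?_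
    rw [hS z hzS, ← hS w hw]
    exact norm_dvd_four_mul_im_mul_star hsq (norm_ne_zero hw) (hcop z hzS) (hcop w hw)
      (by rw [hS y hyS, hS w hw]) (by rw [hS z hzS, hS w hw]) (hyg.trans hzg.symm)
  choose! s hs using quotient
  have s_injOn : Set.InjOn s F := fun y hy y' hy' h =>
    Zsqrtd.eq_of_smul_eq_smul_left four_ne_zero (by rw [(hs y hy).2, (hs y' hy').2, h])
  calc F.card = (F.image s).card := (Finset.card_image_of_injOn s_injOn).symm
    _ ≤ (2 * 4 + 1) ^ 2 := card_le_of_norm_eq_sq hd 4 _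
        (Finset.forall_mem_image.2 fun y hy => (hs y hy).1)

theorem card_le_of_norm_eq_of_gcd_eq (hd : d < 0) (hsq : Squarefree d) {N : ℕ} (hN : N ≠ 0)
    {g : ℕ} (S : Finset (ℤ√d)) (hS : ∀ z ∈ S, z.norm = N)
    (hg : ∀ z ∈ S, Int.gcd z.re z.im = g) : S.card ≤ 81 * N.divisors.card := by
  classical
  have primitive_part (z : ℤ√d) (hz : z ∈ S) :
      ∃ u : ℤ√d, IsCoprime u.re u.im ∧ z = (g : ℤ) * u ∧ (g : ℤ) ^ 2 * u.norm = N := by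
    have z_ne_zero : z ≠ 0 := by
      rw [Ne, ← Zsqrtd.norm_eq_zero_iff hd, hS z hz]
      exact_mod_cast hN
    obtain ⟨u, hu, hcop⟩ := Zsqrtd.exists_coprime_of_gcd_pos ((Zsqrtd.gcd_pos_iff z).2 z_ne_zero)
    rw [hg z hz] at hu
    exact ⟨u, hcop, hu, by rw [← hS z hz, hu, Zsqrtd.norm_mul, Zsqrtd.norm_intCast, sq]⟩
  choose! u hcop hu norm_u using primitive_part
  rcases S.eq_empty_or_nonempty with rfl | ⟨w, hw⟩
  · simp
  obtain ⟨M, hM⟩ : g ^ 2 ∣ N := by exact_mod_cast Dvd.intro _ (norm_u w hw)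
  have g_sq_ne_zero : (g : ℤ) ^ 2 ≠ 0 := by exact_mod_cast left_ne_zero_of_mul (hM ▸ hN)
  have u_norm : ∀ v ∈ S.image u, v.norm = M := Finset.forall_mem_image.2 fun z hz => by
    refine mul_left_cancel₀ g_sq_ne_zero ?_
    rw [norm_u z hz, hM, Nat.cast_mul, Nat.cast_pow]
  have u_injOn : Set.InjOn u S := fun y hy z hz hyz => by rw [hu y hy, hu z hz, hyz]
  calc S.card = (S.image u).card := (Finset.card_image_of_injOn u_injOn).symm
    _ ≤ 81 * M.divisors.card :=
        card_le_of_norm_eq_of_isCoprime hd hsq (right_ne_zero_of_mul (hM ▸ hN)) _ u_norm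
          (Finset.forall_mem_image.2 hcop)
    _ ≤ 81 * N.divisors.card := by
        gcongr
        exact Dvd.intro_left _ hM.symm

theorem card_le_of_norm_eq_of_squarefree (hd : d < 0) (hsq : Squarefree d) {N : ℕ} (hN : N ≠ 0)
    (S : Finset (ℤ√d)) (hS : ∀ z ∈ S, z.norm = N) :
    S.card ≤ 81 * N.divisors.card * N.divisors.card := by
  refine Finset.card_le_mul_card_image_of_maps_to (f := fun z => Int.gcd z.re z.im)
    (fun z hz => ?_) _ fun g _ => ?_
  · have gcd_dvd_norm : (Int.gcd z.re z.im : ℤ) ∣ z.norm :=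
      dvd_sub ((Int.gcd_dvd_left ..).mul_right _) ((Int.gcd_dvd_right ..).mul_left _)
    rw [hS z hz, Int.natCast_dvd_natCast] at gcd_dvd_norm
    exact Nat.mem_divisors.2 ⟨gcd_dvd_norm, hN⟩
  · exact card_le_of_norm_eq_of_gcd_eq hd hsq hN _ (fun z hz => hS z (Finset.mem_filter.1 hz).1)
      fun z hz => (Finset.mem_filter.1 hz).2

theorem card_le_of_norm_eq (hd : d < 0) {N : ℕ} (hN : N ≠ 0)
    (S : Finset (ℤ√d)) (hS : ∀ z ∈ S, z.norm = N) :
    S.card ≤ 81 * N.divisors.card ^ 2 := by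
  classical
  obtain ⟨e, f, he, hf, hef, hsq⟩ := Nat.sq_mul_squarefree_of_pos (Int.natAbs_pos.2 hd.ne)
  have d_eq : d = f ^ 2 * -(e : ℤ) := by
    have : ((f ^ 2 * e : ℕ) : ℤ) = -d := by rw [hef]; omega
    push_cast at this; linarith
  have he' : -(e : ℤ) < 0 := by omega
  let φ : ℤ√d → ℤ√(-(e : ℤ)) := fun z => ⟨z.re, f * z.im⟩
  have norm_φ (z : ℤ√d) : (φ z).norm = z.norm := by
    simp only [φ, Zsqrtd.norm_def, d_eq]
    ring
  have φ_injective : Function.Injective φ := fun y z hyz => by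
    have hf' : (f : ℤ) ≠ 0 := by exact_mod_cast hf.ne'
    obtain ⟨h_re, h_im⟩ := Zsqrtd.ext_iff.1 hyz
    exact Zsqrtd.ext h_re (mul_left_cancel₀ hf' h_im)
  calc S.card = (S.image φ).card := (Finset.card_image_of_injective S φ_injective).symm
    _ ≤ 81 * N.divisors.card * N.divisors.card :=
        card_le_of_norm_eq_of_squarefree he'
          (Int.squarefree_natAbs.1 (by rwa [Int.natAbs_neg])) hN _
          (Finset.forall_mem_image.2 fun z hz => (norm_φ z).trans (hS z hz))
    _ = 81 * N.divisors.card ^ 2 := by ring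

theorem exists_card_le_mul_rpow_of_norm_eq {ε : ℝ} (hε : 0 < ε) :
    ∃ C : ℝ, 0 < C ∧ ∀ d : ℤ, d < 0 → ∀ (N : ℤ) (R : ℝ), 1 ≤ R → N ≤ R →
      ∀ S : Finset (ℤ√d), (∀ z ∈ S, z.norm = N) → (S.card : ℝ) ≤ C * R ^ ε := by
  obtain ⟨C, hC, card_divisors_le⟩ := exists_card_divisors_le_mul_rpow (half_pos hε)
  refine ⟨81 * C ^ 2 + 1, by positivity, fun d hd N R hR hNR S hS => ?_⟩
  have one_le_rpow : 1 ≤ R ^ ε := Real.one_le_rpow hR hε.le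
  rcases S.eq_empty_or_nonempty with rfl | ⟨w, hw⟩
  · rw [Finset.card_empty, Nat.cast_zero]
    positivity
  lift N to ℕ using hS w hw ▸ Zsqrtd.norm_nonneg hd.le w
  rw [Int.cast_natCast] at hNR
  rcases eq_or_ne N 0 with rfl | hN
  · have eq_zero {z : ℤ√d} (hz : z ∈ S) : z = 0 := (Zsqrtd.norm_eq_zero_iff hd z).1 (hS z hz)
    calc (S.card : ℝ) ≤ 1 :=
          mod_cast Finset.card_le_one.2 fun y hy z hz => (eq_zero hy).trans (eq_zero hz).symm
      _ ≤ (81 * C ^ 2 + 1) * R ^ ε :=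
          one_le_mul_of_one_le_of_one_le (le_add_of_nonneg_left (by positivity)) one_le_rpow
  calc (S.card : ℝ) ≤ 81 * (N.divisors.card : ℝ) ^ 2 := mod_cast card_le_of_norm_eq hd hN S hS
    _ ≤ 81 * (C * R ^ (ε / 2)) ^ 2 := by
        gcongr
        exact (card_divisors_le N hN).trans (by gcongr)
    _ = 81 * C ^ 2 * R ^ ε := by
        rw [mul_pow, ← Real.rpow_mul_natCast (by positivity), Nat.cast_two,
          div_mul_cancel₀ ε two_ne_zero, mul_assoc]
    _ ≤ (81 * C ^ 2 + 1) * R ^ ε := by gcongr; exact le_add_of_nonneg_right zero_le_one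

end Zsqrtd

section CommRing

variable {R : Type*} [CommRing R]

theorem sub_dotProduct_sub_self {ι : Type*} [Fintype ι] (v w : ι → R) :
    (v - w) ⬝ᵥ (v - w) = v ⬝ᵥ v - 2 * (v ⬝ᵥ w) + w ⬝ᵥ w := by
  simp only [sub_dotProduct, dotProduct_sub, dotProduct_comm w v]
  ring

theorem sq_dotProduct_cross (p u v : Fin 3 → R) :
    (p ⬝ᵥ u ⨯₃ v) ^ 2 = (p ⬝ᵥ p) * (u ⨯₃ v ⬝ᵥ u ⨯₃ v) - ((p ⬝ᵥ u) ^ 2 * (v ⬝ᵥ v)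
      - 2 * (p ⬝ᵥ u) * (p ⬝ᵥ v) * (u ⬝ᵥ v) + (p ⬝ᵥ v) ^ 2 * (u ⬝ᵥ u)) := by
  simp only [cross_apply, vec3_dotProduct, cons_val]
  ring

theorem cross_self_dotProduct_of_orthogonal {x e : Fin 3 → R} (hxe : x ⬝ᵥ e = 0) :
    x ⨯₃ e ⬝ᵥ x ⨯₃ e = (x ⬝ᵥ x) * (e ⬝ᵥ e) := by
  rw [cross_dot_cross, hxe, zero_mul, sub_zero]

-- `p ⬝ᵥ p` is the squared distance from the origin to the plane through `p`, `q`, `r` plus the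
-- squared circumradius of this triangle; here with denominators cleared.
theorem four_mul_dotProduct_self_mul_cross {p q r : Fin 3 → R}
    (hq : q ⬝ᵥ q = p ⬝ᵥ p) (hr : r ⬝ᵥ r = p ⬝ᵥ p) :
    4 * (p ⬝ᵥ p) * ((q - p) ⨯₃ (r - p) ⬝ᵥ (q - p) ⨯₃ (r - p)) =
      (2 * (p ⬝ᵥ (q - p) ⨯₃ (r - p))) ^ 2 +
        ((q - p) ⬝ᵥ (q - p)) * ((r - p) ⬝ᵥ (r - p)) * ((q - r) ⬝ᵥ (q - r)) := by
  have gram := sq_dotProduct_cross p (q - p) (r - p)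
  have two_mul_dot {s : Fin 3 → R} (hs : s ⬝ᵥ s = p ⬝ᵥ p) :
      2 * (p ⬝ᵥ (s - p)) = -((s - p) ⬝ᵥ (s - p)) := by
    rw [sub_dotProduct_sub_self, dotProduct_sub, hs, dotProduct_comm s p]
    ring
  have h_qr : (q - r) ⬝ᵥ (q - r) = (q - p) ⬝ᵥ (q - p)
      - 2 * ((q - p) ⬝ᵥ (r - p)) + (r - p) ⬝ᵥ (r - p) := by
    rw [← sub_dotProduct_sub_self, sub_sub_sub_cancel_right]
  have hu := two_mul_dot hq
  have hv := two_mul_dot hr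
  generalize q - p = u at *
  generalize r - p = v at *
  rw [h_qr]
  linear_combination -4 * gram + (2 * (p ⬝ᵥ u) - u ⬝ᵥ u) * (v ⬝ᵥ v) * hu +
    (2 * (p ⬝ᵥ v) - v ⬝ᵥ v) * (u ⬝ᵥ u) * hv -
    2 * (u ⬝ᵥ v) * (2 * (p ⬝ᵥ v) * hu - (u ⬝ᵥ u) * hv)

theorem dotProduct_cross_sub_eq_zero_of_mem_plane [IsDomain R] {x : Fin 3 → R} (hx : x ≠ 0) {c : R}
    {p q r z : Fin 3 → R} (hp : p ⬝ᵥ x = c) (hq : q ⬝ᵥ x = c) (hr : r ⬝ᵥ x = c)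
    (hz : z ⬝ᵥ x = c) : (z - p) ⬝ᵥ (q - p) ⨯₃ (r - p) = 0 := by
  rw [triple_product_eq_det]
  refine exists_mulVec_eq_zero_iff.1 ⟨x, hx, funext fun i => ?_⟩
  fin_cases i
  exacts [(sub_dotProduct ..).trans (sub_eq_zero.2 (hz.trans hp.symm)),
    (sub_dotProduct ..).trans (sub_eq_zero.2 (hq.trans hp.symm)),
    (sub_dotProduct ..).trans (sub_eq_zero.2 (hr.trans hp.symm))]

end CommRing

section LinearOrder

variable {R : Type*} [CommRing R] [LinearOrder R] [IsStrictOrderedRing R] {a : R}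

theorem dotProduct_self_nonneg {ι : Type*} [Fintype ι] (v : ι → R) : 0 ≤ v ⬝ᵥ v :=
  Finset.sum_nonneg fun i _ => mul_self_nonneg (v i)

theorem dotProduct_self_pos {ι : Type*} [Fintype ι] {v : ι → R} (hv : v ≠ 0) : 0 < v ⬝ᵥ v :=
  (dotProduct_self_nonneg v).lt_of_ne' (dotProduct_self_eq_zero.not.2 hv)

theorem cross_sub_ne_zero_of_mem_sphere {p q r : Fin 3 → R} (hp : p ⬝ᵥ p = a) (hq : q ⬝ᵥ q = a)
    (hr : r ⬝ᵥ r = a) (hpq : p ≠ q) (hpr : p ≠ r) (hqr : q ≠ r) :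
    (q - p) ⨯₃ (r - p) ≠ 0 := fun h => by
  have circumradius := four_mul_dotProduct_self_mul_cross (hq.trans hp.symm) (hr.trans hp.symm)
  simp only [h, dotProduct_zero, mul_zero, ne_eq, OfNat.ofNat_ne_zero, not_false_eq_true, zero_pow,
    zero_add] at circumradius
  have := dotProduct_self_pos (sub_ne_zero.2 hpq.symm)
  have := dotProduct_self_pos (sub_ne_zero.2 hpr.symm)
  have := dotProduct_self_pos (sub_ne_zero.2 hqr)
  have : 0 < ((q - p) ⬝ᵥ (q - p)) * ((r - p) ⬝ᵥ (r - p)) * ((q - r) ⬝ᵥ (q - r)) := by positivity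
  exact this.ne circumradius

theorem sub_dotProduct_sub_self_le_of_mem_sphere {ι : Type*} [Fintype ι] {p q : ι → R}
    (hp : p ⬝ᵥ p = a) (hq : q ⬝ᵥ q = a) : (q - p) ⬝ᵥ (q - p) ≤ 4 * a := by
  have parallelogram : (q - p) ⬝ᵥ (q - p) + (q + p) ⬝ᵥ (q + p) = 4 * a := by
    rw [← hq, sub_dotProduct_sub_self, hp]
    simp only [add_dotProduct, dotProduct_add, dotProduct_comm p q, hp, hq]
    ring
  linarith [dotProduct_self_nonneg (q + p)]

theorem cross_dotProduct_cross_self_le (u v : Fin 3 → R) :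
    u ⨯₃ v ⬝ᵥ u ⨯₃ v ≤ (u ⬝ᵥ u) * (v ⬝ᵥ v) := by
  rw [cross_dot_cross, dotProduct_comm v u]
  exact sub_le_self _ (mul_self_nonneg _)

theorem eq_zero_of_dotProduct_cross_eq_zero {p u v : Fin 3 → R} (huv : u ⨯₃ v ≠ 0)
    (hu : p ⬝ᵥ u = 0) (hv : p ⬝ᵥ v = 0) (hcross : p ⬝ᵥ u ⨯₃ v = 0) : p = 0 := by
  have gram := sq_dotProduct_cross p u v
  rw [hu, hv, hcross] at gram
  have : (p ⬝ᵥ p) * (u ⨯₃ v ⬝ᵥ u ⨯₃ v) = 0 := by linear_combination -gram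
  exact dotProduct_self_eq_zero.1
    ((mul_eq_zero.1 this).resolve_right (dotProduct_self_eq_zero.not.2 huv))

end LinearOrder

section LatticePoints

/-- The coordinates of `z` along the orthogonal vectors `x ⨯₃ e` and `e` of the plane orthogonal to
`x`, packed as an element of `ℤ√(-⟨x, x⟩)` so that the norm is, up to scale, the squared length of
the projection of `z` to that plane. -/
def planeCoord (x e z : Fin 3 → ℤ) : ℤ√(-(x ⬝ᵥ x)) :=
  ⟨z ⬝ᵥ x ⨯₃ e, z ⬝ᵥ e⟩

variable {x e : Fin 3 → ℤ}

theorem norm_planeCoord (hxe : x ⬝ᵥ e = 0) (z : Fin 3 → ℤ) : (planeCoord x e z).norm =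
    (e ⬝ᵥ e) * ((x ⬝ᵥ x) * (z ⬝ᵥ z) - (z ⬝ᵥ x) ^ 2) := by
  have gram := sq_dotProduct_cross z x e
  rw [cross_self_dotProduct_of_orthogonal hxe, hxe] at gram
  rw [Zsqrtd.norm_def, planeCoord]
  linear_combination gram

theorem planeCoord_injOn (hx : x ≠ 0) (he : e ≠ 0) (hxe : x ⬝ᵥ e = 0) (c : ℤ) :
    Set.InjOn (planeCoord x e) {z | z ⬝ᵥ x = c} := fun y hy z hz hyz => by
  have cross_ne_zero : x ⨯₃ e ≠ 0 := by
    rw [Ne, ← dotProduct_self_eq_zero, cross_self_dotProduct_of_orthogonal hxe]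
    exact (mul_pos (dotProduct_self_pos hx) (dotProduct_self_pos he)).ne'
  obtain ⟨h_cross, h_e⟩ := Zsqrtd.ext_iff.1 hyz
  refine sub_eq_zero.1 (eq_zero_of_dotProduct_cross_eq_zero cross_ne_zero ?_ ?_ ?_) <;>
    rw [sub_dotProduct, sub_eq_zero]
  exacts [hy.trans hz.symm, h_e, h_cross]

theorem exists_planeCoord_injOn_norm_eq {a c : ℤ} {x : Fin 3 → ℤ} (hx : x ≠ 0)
    {S : Finset (Fin 3 → ℤ)} (hS : ∀ z ∈ S, z ⬝ᵥ z = a ∧ z ⬝ᵥ x = c) (hcard : 2 < S.card) :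
    ∃ n e : Fin 3 → ℤ, n ≠ 0 ∧ Set.InjOn (planeCoord n e) S ∧
      ∃ N ≤ 64 * a ^ 4, ∀ z ∈ S, (planeCoord n e z).norm = N := by
  obtain ⟨p, hp, q, hq, r, hr, hpq, hpr, hqr⟩ := Finset.two_lt_card.1 hcard
  obtain ⟨hpa, hpc⟩ := hS p hp
  obtain ⟨hqa, hqc⟩ := hS q hq
  obtain ⟨hra, hrc⟩ := hS r hr
  have n_ne_zero : (q - p) ⨯₃ (r - p) ≠ 0 := cross_sub_ne_zero_of_mem_sphere hpa hqa hra hpq hpr hqr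
  have n_orthogonal : (q - p) ⨯₃ (r - p) ⬝ᵥ (q - p) = 0 := by
    rw [dotProduct_comm, dot_self_cross]
  have mem_plane (z) (hz : z ∈ S) : z ⬝ᵥ (q - p) ⨯₃ (r - p) = p ⬝ᵥ (q - p) ⨯₃ (r - p) := by
    rw [← sub_eq_zero, ← sub_dotProduct]
    exact dotProduct_cross_sub_eq_zero_of_mem_plane hx hpc hqc hrc (hS z hz).2
  have a_nonneg : 0 ≤ a := hpa ▸ dotProduct_self_nonneg p
  have e_le : (q - p) ⬝ᵥ (q - p) ≤ 4 * a := sub_dotProduct_sub_self_le_of_mem_sphere hpa hqa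
  have n_le : (q - p) ⨯₃ (r - p) ⬝ᵥ (q - p) ⨯₃ (r - p) ≤ (4 * a) * (4 * a) :=
    (cross_dotProduct_cross_self_le _ _).trans <| mul_le_mul e_le
      (sub_dotProduct_sub_self_le_of_mem_sphere hpa hra) (dotProduct_self_nonneg _) (by positivity)
  have e_nonneg := dotProduct_self_nonneg (q - p)
  generalize (q - p) ⨯₃ (r - p) = n at *
  have n_nonneg := dotProduct_self_nonneg n
  refine ⟨n, q - p, n_ne_zero,
    (planeCoord_injOn n_ne_zero (sub_ne_zero.2 hpq.symm) n_orthogonal _).mono mem_plane,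
    ((q - p) ⬝ᵥ (q - p)) * ((n ⬝ᵥ n) * a - (p ⬝ᵥ n) ^ 2), ?_, fun z hz => ?_⟩
  · calc ((q - p) ⬝ᵥ (q - p)) * ((n ⬝ᵥ n) * a - (p ⬝ᵥ n) ^ 2)
        ≤ ((q - p) ⬝ᵥ (q - p)) * ((n ⬝ᵥ n) * a) := by
          gcongr; exact sub_le_self _ (sq_nonneg _)
      _ ≤ 4 * a * (4 * a * (4 * a) * a) := by gcongr
      _ = 64 * a ^ 4 := by ring
  · rw [norm_planeCoord n_orthogonal, (hS z hz).1, mem_plane z hz]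

theorem exists_card_sphere_inter_plane_le {ε : ℝ} (hε : 0 < ε) :
    ∃ C : ℝ, 0 < C ∧ ∀ R : ℝ, 1 ≤ R → ∀ a : ℤ, a ≤ R → ∀ x : Fin 3 → ℤ, x ≠ 0 → ∀ c : ℤ,
      ∀ S : Finset (Fin 3 → ℤ), (∀ z ∈ S, z ⬝ᵥ z = a ∧ z ⬝ᵥ x = c) →
        (S.card : ℝ) ≤ C * R ^ ε := by
  classical
  obtain ⟨C, hC, card_norm_le⟩ := exists_card_le_mul_rpow_of_norm_eq (show 0 < ε / 4 by positivity)
  refine ⟨C * 64 ^ (ε / 4) + 2, by positivity, fun R hR a haR x hx c S hS => ?_⟩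
  rcases le_or_gt S.card 2 with hcard | hcard
  · calc (S.card : ℝ) ≤ 2 * 1 := by rw [mul_one]; exact_mod_cast hcard
      _ ≤ (C * 64 ^ (ε / 4) + 2) * R ^ ε := by
          gcongr
          exacts [le_add_of_nonneg_left (by positivity), Real.one_le_rpow hR hε.le]
  obtain ⟨n, e, hn, injOn, N, hN, norm_eq⟩ := exists_planeCoord_injOn_norm_eq hx hS hcard
  obtain ⟨p, hp⟩ : S.Nonempty := Finset.card_pos.1 (by omega)
  have a_nonneg : 0 ≤ (a : ℝ) := mod_cast (hS p hp).1 ▸ dotProduct_self_nonneg p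
  have N_le : (N : ℝ) ≤ 64 * R ^ 4 := by
    calc (N : ℝ) ≤ 64 * (a : ℝ) ^ 4 := mod_cast hN
      _ ≤ 64 * R ^ 4 := by gcongr
  calc (S.card : ℝ) = (S.image (planeCoord n e)).card := by rw [Finset.card_image_of_injOn injOn]
    _ ≤ C * (64 * R ^ 4) ^ (ε / 4) :=
        card_norm_le _ (neg_neg_of_pos (dotProduct_self_pos hn)) N _
          (one_le_mul_of_one_le_of_one_le (by norm_num) (one_le_pow₀ hR)) N_le _
          (Finset.forall_mem_image.2 norm_eq)
    _ = C * 64 ^ (ε / 4) * R ^ ε := by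
        rw [Real.mul_rpow (by positivity) (by positivity), ← Real.rpow_natCast_mul (by positivity),
          Nat.cast_ofNat, mul_div_cancel₀ ε four_ne_zero, mul_assoc]
    _ ≤ (C * 64 ^ (ε / 4) + 2) * R ^ ε := by gcongr; exact le_add_of_nonneg_right zero_le_two

end LatticePoints

theorem natCard_subtype_le_of_forall_finset_card_le_s8 {α : Type*} {P : α → Prop} {B : ℝ}
    (h : ∀ S : Finset α, (∀ z ∈ S, P z) → (S.card : ℝ) ≤ B) : (Nat.card {z // P z} : ℝ) ≤ B := by
  rcases finite_or_infinite {z // P z} with hfin | _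
  · have hP : {z | P z}.Finite := hfin
    have card_eq : Nat.card {z // P z} = hP.toFinset.card := Nat.card_eq_card_finite_toFinset hP
    exact card_eq ▸ h _ fun z hz => hP.mem_toFinset.1 hz
  · simpa using h ∅

theorem sphere_intersection_count_general {ε : ℝ} (hε : 0 < ε) :
    ∃ C : ℝ, 0 < C ∧ ∀ q : ℕ, 0 < q → ∀ x : Fin 3 → ℤ, x ≠ 0 → ∀ a b : ℤ, a ≤ 4 * (q : ℤ) ^ 2 →
      (Nat.card {z : Fin 3 → ℤ // z ⬝ᵥ z = a ∧ (z - x) ⬝ᵥ (z - x) = b} : ℝ) ≤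
        C * (q : ℝ) ^ ε := by
  obtain ⟨C, hC, card_le⟩ := exists_card_sphere_inter_plane_le (half_pos hε)
  refine ⟨C * 4 ^ (ε / 2), by positivity, fun q hq x hx a b ha => ?_⟩
  have one_le_q : (1 : ℝ) ≤ q := mod_cast hq
  have rpow_eq : C * (4 * (q : ℝ) ^ 2) ^ (ε / 2) = C * 4 ^ (ε / 2) * (q : ℝ) ^ ε := by
    rw [Real.mul_rpow (by positivity) (by positivity), ← Real.rpow_natCast_mul (by positivity),
      Nat.cast_two, mul_div_cancel₀ ε two_ne_zero, mul_assoc]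
  rw [← rpow_eq]
  refine natCard_subtype_le_of_forall_finset_card_le_s8 fun S hS =>
    card_le _ (one_le_mul_of_one_le_of_one_le (by norm_num) (one_le_pow₀ one_le_q)) a
      (mod_cast ha) x hx ((a + x ⬝ᵥ x - b) / 2) S fun z hz => ?_
  obtain ⟨hza, hzb⟩ := hS z hz
  rw [sub_dotProduct_sub_self, hza] at hzb
  exact ⟨hza, by omega⟩

/-- For every `ε > 0` there is `C > 0` such that for every integer `q > 1`, every
nonzero `x ∈ ℤ³` and all integers `0 ≤ a, b ≤ 4q²`, the number of `z ∈ ℤ³` with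
`⟨z,z⟩ = a` and `⟨z-x, z-x⟩ = b` is at most `C · q^ε`. -/
theorem sphere_intersection_count :
    ∀ ε : ℝ, 0 < ε → ∃ C : ℝ, 0 < C ∧ ∀ q : ℕ, 1 < q →
      ∀ x : Fin 3 → ℤ, x ≠ 0 → ∀ a b : ℤ,
        0 ≤ a → a ≤ 4 * (q : ℤ) ^ 2 → 0 ≤ b → b ≤ 4 * (q : ℤ) ^ 2 →
        (Nat.card {z : Fin 3 → ℤ // z ⬝ᵥ z = a ∧ (z - x) ⬝ᵥ (z - x) = b} : ℝ) ≤
          C * (q : ℝ) ^ ε := by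
  intro ε hε
  obtain ⟨C, hC, card_le⟩ := sphere_intersection_count_general hε
  exact ⟨C, hC, fun q hq x hx a b _ ha _ _ => card_le q (one_pos.trans hq) x hx a b ha⟩
end
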